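/- Let K be a totally real biquadratic field and let 1 < m < s < t be the three square-free integers whose square roots lie in K. Suppose m ≢ 1 (mod 4), m ∉ {2, 3, 6, 7}, and s ∉ {m+4, m+8, m+12}. Then the Pythagoras number of O_K is at least 5. Moreover, the element α₀ = 7 + (1+√m)² of O_K has length exactly 5, unless (m,s) is one of (10,13), (11,13), (30,35); in the first two of these exceptional fields the element 3 + ((1+√13)/2)² + (1+(1+√13)/2)² has length 5, and in the last the element 7 + (1+√42)² has length 5. -/

import Mathlib

/-!
Write `t₀ < s₀ < m₀` for the pairwise greatest common divisors of the radicands, so that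
`m = t₀s₀`, `s = t₀m₀`, `t = s₀m₀`, `√m√s = t₀√t`, `√m√t = s₀√s` and `√s√t = m₀√m`. The numbers
`1, √m, √s, √t` form a `ℚ`-basis of `K` (`exists_factors_and_coords`, `sqrt_independent`). For an
integer of `K`, the partial traces and norms to the three quadratic subfields show that the
coordinates are half-integers `a/2, b/2, c/2, d/2` whose numerators satisfy congruences modulo `2`
and `4` (`integer_coordinates`); here `m ≢ 1 (mod 4)` is used.

Suppose an element `e₀ + e₁√m + e₂√s + e₃√t` is a sum of four integral squares. Comparison of
coordinates (`four_squares_system`) gives vectors `a, b, c, d ∈ ℤ⁴` with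
`|a|² + m|b|² + s|c|² + t|d|² = 4e₀`, `a·b + m₀ c·d = 2e₁`, `a·c + s₀ b·d = 2e₂` and
`a·d + t₀ b·c = 2e₃`. For `α₀ = (8 + m) + 2√m` the first equation is a trace bound which leaves
very few possible norms `|b|², |c|², |d|²`. The square-free radicands fall into five classes modulo
`4` (`residues_mod_four`), and in each of them the congruences become a parity pattern of the
coordinates (`parity_s_one` and its companions). In each class the trace bound, the bilinear
equations and the hypothesis on `s - m` exclude every solution that uses `√s` or `√t`, apart from
the three exceptional pairs `(m, s)`. What remains are representations inside `ℤ[√m]`, where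
`|b|²` (after halving) is `1` and `7` would be a sum of three squares (`no_rep_quadratic`).

The alternative elements `12 + 2√13` and `50 + 2√42` of the exceptional fields lead to the same
system, where the trace bound finally requires `12` to be a sum of two squares
(`no_rep_thirteen`, `no_rep_forty_two`). Representations by five squares are immediate from
`7 = 2² + 1² + 1² + 1²` and `3 = 1² + 1² + 1²`.

In the lemmas about the system, `p < q < r` stand for `t₀ < s₀ < m₀`, and `a, b, c, d` for the
vectors of doubled coordinates at `1, √m, √s, √t`.
-/

/-- The totally real biquadratic field `ℚ(√p, √q)` as a subfield of `ℝ`. -/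
noncomputable def biqField (p q : ℕ) : IntermediateField ℚ ℝ :=
  IntermediateField.adjoin ℚ {Real.sqrt p, Real.sqrt q}

/-- The ring of integers of a subfield `K` of `ℝ`, viewed as the set of elements
of `K` that are integral over `ℤ`. -/
def ringOfInt (K : IntermediateField ℚ ℝ) : Set ℝ :=
  {x : ℝ | x ∈ K ∧ IsIntegral ℤ x}

/-- `α` is a sum of `n` squares of elements of `S`. -/
def SumOfNSquaresIn (S : Set ℝ) (n : ℕ) (α : ℝ) : Prop :=
  ∃ x : Fin n → ℝ, (∀ i, x i ∈ S) ∧ α = ∑ i, x i ^ 2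

/-- `α` is a sum of squares of elements of `S`. -/
def IsSumOfSquaresIn (S : Set ℝ) (α : ℝ) : Prop := ∃ n, SumOfNSquaresIn S n α

/-- `K` is a totally real biquadratic field. -/
def IsBiquadratic (K : IntermediateField ℚ ℝ) : Prop :=
  ∃ p q : ℕ, Squarefree p ∧ Squarefree q ∧ 1 < p ∧ 1 < q ∧ p ≠ q ∧ K = biqField p q

/-! ### Linear independence of square roots -/

lemma squarefree_eq_of_isSquare_mul {a b : ℕ} (ha : Squarefree a) (hb : Squarefree b)
    (h : IsSquare (a * b)) : a = b := by
  obtain ⟨k, hk⟩ := h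
  have hak : a ∣ k := by
    have : a ∣ k ^ 2 := ⟨b, by rw [sq, hk]⟩
    exact (ha.dvd_pow_iff_dvd two_ne_zero).1 this
  obtain ⟨j, rfl⟩ := hak
  have ha0 : 0 < a := Nat.pos_of_ne_zero ha.ne_zero
  have hb' : b = a * (j * j) := by
    apply Nat.eq_of_mul_eq_mul_left ha0
    rw [hk]; ring
  have hj : IsUnit j := hb j ⟨a, by rw [hb']; ring⟩
  rw [Nat.isUnit_iff] at hj
  subst hj
  simpa using hb'.symm

lemma natCast_ne_sq_of_squarefree {n : ℕ} (hn : Squarefree n) (h1 : 1 < n) (r : ℚ) :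
    r ^ 2 ≠ n := by
  intro h
  have : IsSquare (n : ℚ) := ⟨r, by rw [← h, sq]⟩
  rw [Rat.isSquare_natCast_iff] at this
  have := squarefree_eq_of_isSquare_mul hn squarefree_one (by simpa using this)
  omega

lemma natCast_mul_ne_sq_of_squarefree {a b : ℕ} (ha : Squarefree a) (hb : Squarefree b)
    (hab : a ≠ b) (r : ℚ) : r ^ 2 ≠ (a : ℚ) * b := by
  intro h
  have : IsSquare ((a * b : ℕ) : ℚ) := ⟨r, by push_cast; rw [← h, sq]⟩
  rw [Rat.isSquare_natCast_iff] at this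
  exact hab (squarefree_eq_of_isSquare_mul ha hb this)

lemma coeffs_zero_of_add_mul_eq_zero {q : ℚ} {x : ℝ} (hx : x ^ 2 = q) (hq : ∀ r : ℚ, r ^ 2 ≠ q)
    {u v : ℚ} (h : (u : ℝ) + v * x = 0) : u = 0 ∧ v = 0 := by
  have hv : v = 0 := by
    by_contra hv
    have hvR : (v : ℝ) ≠ 0 := by exact_mod_cast hv
    apply hq (-u / v)
    have hx' : x = ((-u / v : ℚ) : ℝ) := by
      push_cast
      field_simp
      linarith
    rw [hx'] at hx
    exact_mod_cast hx
  subst hv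
  refine ⟨?_, rfl⟩
  simpa using h

/-- Linear independence of `1, √p, √q, √p√q` over `ℚ`. Each of the three ways of splitting
the vanishing sum into two pairs and squaring gives one quadratic relation; together they say
`a² = p q d²` and `p b² = q c²`. -/
lemma coeffs_zero_of_biquadratic {p q : ℚ} {x y : ℝ} (hx : x ^ 2 = p) (hy : y ^ 2 = q)
    (hp : ∀ r : ℚ, r ^ 2 ≠ p) (hq : ∀ r : ℚ, r ^ 2 ≠ q) (hpq : ∀ r : ℚ, r ^ 2 ≠ p * q)
    {a b c d : ℚ} (h : (a : ℝ) + b * x + c * y + d * (x * y) = 0) :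
    a = 0 ∧ b = 0 ∧ c = 0 ∧ d = 0 := by
  have e1 := (coeffs_zero_of_add_mul_eq_zero hx hp
    (u := a ^ 2 + p * b ^ 2 - q * c ^ 2 - p * q * d ^ 2) (v := 2 * (a * b - q * c * d)) (by
      push_cast; rw [← hx, ← hy]
      linear_combination (a + b * x - c * y - d * (x * y)) * h)).1
  have e2 := (coeffs_zero_of_add_mul_eq_zero hy hq
    (u := a ^ 2 + q * c ^ 2 - p * b ^ 2 - p * q * d ^ 2) (v := 2 * (a * c - p * b * d)) (by
      push_cast; rw [← hx, ← hy]
      linear_combination (a - b * x + c * y - d * (x * y)) * h)).1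
  have had : a ^ 2 = p * q * d ^ 2 := by linarith
  have hbc : p * b ^ 2 = q * c ^ 2 := by linarith
  have hp0 : p ≠ 0 := fun h0 => hp 0 (by simp [h0])
  have hd : d = 0 := by
    by_contra hd
    apply hpq (a / d)
    field_simp
    linarith
  have hc : c = 0 := by
    by_contra hc
    apply hpq (p * b / c)
    field_simp
    linarith
  subst hd hc
  simp [hp0] at had hbc
  exact ⟨had, hbc, rfl, rfl⟩

/-- A square root of a rational number lying in `ℚ(√p, √q)` is a rational multiple of one of
`1, √p, √q, √p√q`. -/
lemma sqrt_mem_biquadratic {p q n : ℚ} {x y z : ℝ} (hx : x ^ 2 = p) (hy : y ^ 2 = q)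
    (hz : z ^ 2 = n)
    (hp : ∀ r : ℚ, r ^ 2 ≠ p) (hq : ∀ r : ℚ, r ^ 2 ≠ q) (hpq : ∀ r : ℚ, r ^ 2 ≠ p * q)
    (hn : ∀ r : ℚ, r ^ 2 ≠ n)
    {a b c d : ℚ} (h : z = (a : ℝ) + b * x + c * y + d * (x * y)) :
    ∃ r : ℚ, z = r * x ∨ z = r * y ∨ z = r * (x * y) := by
  obtain ⟨-, e1, e2, e3⟩ := coeffs_zero_of_biquadratic hx hy hp hq hpq
    (a := a ^ 2 + p * b ^ 2 + q * c ^ 2 + p * q * d ^ 2 - n) (b := 2 * (a * b + q * c * d))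
    (c := 2 * (a * c + p * b * d)) (d := 2 * (a * d + b * c)) (by
      push_cast; rw [← hz, ← hx, ← hy, h]; ring)
  have ha : a = 0 := by
    by_contra ha
    have hd : d = -(b * c) / a := by field_simp; linarith
    have hb : b = 0 := by
      by_contra hb
      have hc : c ≠ 0 := by
        rintro rfl
        simp [ha, hb] at e1
      apply hq (a / c)
      subst hd
      field_simp at e1 ⊢
      have : b * (a ^ 2 - q * c ^ 2) = 0 := by linear_combination e1 / 2
      rcases mul_eq_zero.1 this with h | h
      · exact absurd h hb
      · linarith
    subst hb
    have hd : d = 0 := by simpa using hd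
    subst hd
    have hc : c = 0 := by simpa [ha] using e2
    subst hc
    apply hn a
    have : z ^ 2 = (a : ℝ) ^ 2 := by rw [h]; simp
    rw [hz] at this
    exact_mod_cast this.symm
  subst ha
  have hp0 : p ≠ 0 := fun h0 => hp 0 (by simp [h0])
  have hq0 : q ≠ 0 := fun h0 => hq 0 (by simp [h0])
  simp [hp0, hq0] at e1 e2 e3
  by_cases hb : b = 0
  · by_cases hc : c = 0
    · exact ⟨d, Or.inr (Or.inr (by rw [h, hb, hc]; simp))⟩
    · have hd : d = 0 := by tauto
      exact ⟨c, Or.inr (Or.inl (by rw [h, hb, hd]; simp))⟩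
  · have hd : d = 0 := by tauto
    have hc : c = 0 := by tauto
    exact ⟨b, Or.inl (by rw [h, hc, hd]; simp)⟩

lemma exists_coeffs_of_mem_adjoin {x y z : ℝ} {p q k l n : ℚ} (hx : x ^ 2 = p) (hy : y ^ 2 = q)
    (hxy : x * y = n * z) (hxz : x * z = k * y) (hyz : y * z = l * x) (hn : n ≠ 0)
    (S : Set ℝ) (hS : ∀ u ∈ S, IsIntegral ℚ u ∧ ∃ a b c d : ℚ, u = a + b * x + c * y + d * z)
    {u : ℝ} (hu : u ∈ IntermediateField.adjoin ℚ S) :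
    ∃ a b c d : ℚ, u = a + b * x + c * y + d * z := by
  have hz : z ^ 2 = ((k * q / n : ℚ) : ℝ) := by
    have hnR : (n : ℝ) ≠ 0 := by exact_mod_cast hn
    push_cast
    field_simp
    rw [← hy]
    linear_combination y * hxz - z * hxy
  rw [← IntermediateField.mem_toSubalgebra,
    IntermediateField.adjoin_toSubalgebra_of_isAlgebraic (fun u hu => (hS u hu).1.isAlgebraic)] at hu
  induction hu using Algebra.adjoin_induction with
  | mem u hu => exact (hS u hu).2
  | algebraMap r => exact ⟨r, 0, 0, 0, by simp⟩
  | add u v _ _ hu hv =>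
    obtain ⟨a, b, c, d, rfl⟩ := hu
    obtain ⟨a', b', c', d', rfl⟩ := hv
    exact ⟨a + a', b + b', c + c', d + d', by push_cast; ring⟩
  | mul u v _ _ hu hv =>
    obtain ⟨a, b, c, d, rfl⟩ := hu
    obtain ⟨a', b', c', d', rfl⟩ := hv
    refine ⟨a * a' + p * (b * b') + q * (c * c') + (k * q / n) * (d * d'),
      a * b' + b * a' + l * (c * d' + d * c'), a * c' + c * a' + k * (b * d' + d * b'),
      a * d' + d * a' + n * (b * c' + c * b'), ?_⟩
    push_cast at hz ⊢
    rw [← hx, ← hy]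
    rw [← hy] at hz
    linear_combination (d * d' : ℝ) * hz + (b * c' + c * b' : ℝ) * hxy +
      (b * d' + d * b' : ℝ) * hxz + (c * d' + d * c' : ℝ) * hyz

/-! ### The three radicands of a biquadratic field -/

/-- If three distinct squarefree integers `m, s, t > 1` have square roots in `ℚ(√p, √q)`, then
`√m, √s, √t` are, up to order and rational factors, `√p, √q, √p√q`; hence `mst` is a rational
square, and each of `√p, √q` is a rational multiple of one of `√m, √s, √t`. -/
lemma classes_of_three_roots {p q m s t : ℕ} (hp : Squarefree p) (hq : Squarefree q)
    (h1p : 1 < p) (h1q : 1 < q) (hpq : p ≠ q)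
    (hm : Squarefree m) (hs : Squarefree s) (ht : Squarefree t)
    (h1m : 1 < m) (hms : m < s) (hst : s < t)
    (hmK : √(m : ℝ) ∈ biqField p q) (hsK : √(s : ℝ) ∈ biqField p q)
    (htK : √(t : ℝ) ∈ biqField p q) :
    (∃ r : ℚ, r ^ 2 = m * s * t) ∧
    (∃ r : ℚ, √(p : ℝ) = r * √m ∨ √(p : ℝ) = r * √s ∨ √(p : ℝ) = r * √t) ∧
    (∃ r : ℚ, √(q : ℝ) = r * √m ∨ √(q : ℝ) = r * √s ∨ √(q : ℝ) = r * √t) := by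
  have sq (n : ℕ) : √(n : ℝ) ^ 2 = ((n : ℚ) : ℝ) := by
    rw [Real.sq_sqrt (Nat.cast_nonneg n)]; simp
  have hx := sq p
  have hy := sq q
  have key : ∀ n : ℕ, Squarefree n → 1 < n → √(n : ℝ) ∈ biqField p q →
      ∃ r : ℚ, √(n : ℝ) = r * √p ∨ √(n : ℝ) = r * √q ∨ √(n : ℝ) = r * (√p * √q) := by
    intro n hn h1n hnK
    obtain ⟨a, b, c, d, h⟩ := exists_coeffs_of_mem_adjoin (x := √p) (y := √q) (z := √p * √q)
      (n := 1) (k := p) (l := q) hx hy (by simp) (by rw [← hx]; ring) (by rw [← hy]; ring)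
      one_ne_zero _ (by
        have sqrt_int (n : ℕ) : IsIntegral ℚ √(n : ℝ) := by
          apply IsIntegral.of_pow (n := 2) (by norm_num)
          rw [sq]
          exact isIntegral_algebraMap (A := ℝ) (x := (n : ℚ))
        rintro u (rfl | rfl)
        · exact ⟨sqrt_int p, 0, 1, 0, 0, by simp⟩
        · exact ⟨sqrt_int q, 0, 0, 1, 0, by simp⟩) hnK
    exact sqrt_mem_biquadratic hx hy (sq n) (natCast_ne_sq_of_squarefree hp h1p)
      (natCast_ne_sq_of_squarefree hq h1q) (natCast_mul_ne_sq_of_squarefree hp hq hpq)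
      (natCast_ne_sq_of_squarefree hn h1n) h
  -- two distinct integers cannot have square roots in the same class
  have clash : ∀ {a b : ℕ}, Squarefree a → Squarefree b → a ≠ b → ∀ {w : ℝ} {e r r' : ℚ},
      w ^ 2 = e → √(a : ℝ) = r * w → √(b : ℝ) = r' * w → False := by
    intro a b ha hb hab w e r r' hw h h'
    apply natCast_mul_ne_sq_of_squarefree ha hb hab (r * r' * e)
    have h1 := sq a
    have h2 := sq b
    rw [h] at h1
    rw [h'] at h2
    have : (((r * r' * e) ^ 2 : ℚ) : ℝ) = ((a * b : ℚ) : ℝ) := by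
      rw [Rat.cast_mul, ← h1, ← h2]; push_cast; rw [← hw]; ring
    exact_mod_cast this
  have hw : (√(p : ℝ) * √q) ^ 2 = ((p * q : ℚ) : ℝ) := by
    rw [mul_pow, hx, hy]; push_cast; rfl
  -- the product of the three classes is rational
  have prod : ∀ {r r' r'' : ℚ}, √(m : ℝ) * √s * √t = r * r' * r'' * (√p ^ 2 * √q ^ 2) →
      ∃ r : ℚ, r ^ 2 = m * s * t := by
    intro r r' r'' h
    refine ⟨r * r' * r'' * (p * q), ?_⟩
    have : (((r * r' * r'' * (p * q)) ^ 2 : ℚ) : ℝ) = ((m * s * t : ℚ) : ℝ) := by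
      rw [Rat.cast_mul, Rat.cast_mul, ← sq m, ← sq s, ← sq t, ← mul_pow, ← mul_pow, h, hx, hy]
      push_cast; ring
    exact_mod_cast this
  have inv : ∀ {n : ℕ} {r : ℚ} {w : ℝ}, 1 < n → √(n : ℝ) = r * w → w = (r⁻¹ : ℚ) * √n := by
    intro n r w hn h
    have hr : (r : ℝ) ≠ 0 := by
      intro h0
      rw [h0, zero_mul, Real.sqrt_eq_zero (Nat.cast_nonneg n)] at h
      have : n = 0 := by exact_mod_cast h
      omega
    rw [h]; push_cast; field_simp
  have h1s : 1 < s := by omega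
  have h1t : 1 < t := by omega
  obtain ⟨r, hr⟩ := key m hm h1m hmK
  obtain ⟨r', hr'⟩ := key s hs h1s hsK
  obtain ⟨r'', hr''⟩ := key t ht h1t htK
  rcases hr with h | h | h <;> rcases hr' with h' | h' | h' <;>
    first
    | exact (clash hm hs hms.ne hx h h').elim
    | exact (clash hm hs hms.ne hy h h').elim
    | exact (clash hm hs hms.ne hw h h').elim
    | (rcases hr'' with h'' | h'' | h'' <;>
        first
        | exact (clash hm ht (hms.trans hst).ne hx h h'').elim
        | exact (clash hm ht (hms.trans hst).ne hy h h'').elim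
        | exact (clash hm ht (hms.trans hst).ne hw h h'').elim
        | exact (clash hs ht hst.ne hx h' h'').elim
        | exact (clash hs ht hst.ne hy h' h'').elim
        | exact (clash hs ht hst.ne hw h' h'').elim
        | (refine ⟨prod (r := r) (r' := r') (r'' := r'')
              (by rw [h, h', h'']; ring), ?_, ?_⟩ <;>
            first
            | exact ⟨_, Or.inl (inv h1m h)⟩
            | exact ⟨_, Or.inr (Or.inl (inv h1s h'))⟩
            | exact ⟨_, Or.inr (Or.inr (inv h1t h''))⟩))

/-- The factorization of the three radicands: `m = t₀s₀`, `s = t₀m₀`, `t = s₀m₀` with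
`t₀ < s₀ < m₀`. -/
lemma exists_gcd_factors {m s t : ℕ} (hm : Squarefree m) (hs : Squarefree s) (ht : Squarefree t)
    (hms : m < s) (hst : s < t) (h : ∃ r : ℚ, r ^ 2 = m * s * t) :
    ∃ t₀ s₀ m₀ : ℕ, 0 < t₀ ∧ t₀ < s₀ ∧ s₀ < m₀ ∧ m = t₀ * s₀ ∧ s = t₀ * m₀ ∧ t = s₀ * m₀ := by
  have hm0 : 0 < m := Nat.pos_of_ne_zero hm.ne_zero
  obtain ⟨r, hr⟩ := h
  have hsq : IsSquare ((m * s * t : ℕ) : ℚ) := ⟨r, by push_cast; rw [← hr, sq]⟩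
  rw [Rat.isSquare_natCast_iff] at hsq
  obtain ⟨k, hk⟩ := hsq
  obtain ⟨g, s₀, m₀, hg, hcop, rfl, rfl⟩ := Nat.exists_coprime' (Nat.gcd_pos_of_pos_left s hm0)
  have hsf : Squarefree (s₀ * m₀) := by
    rw [Nat.squarefree_mul hcop]
    exact ⟨hm.of_mul_left, hs.of_mul_left⟩
  have hgk : g ∣ k := by
    have : g ^ 2 ∣ k ^ 2 := ⟨s₀ * m₀ * t, by rw [sq k, ← hk]; ring⟩
    exact (Nat.pow_dvd_pow_iff two_ne_zero).1 this
  obtain ⟨j, rfl⟩ := hgk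
  have htt : s₀ * m₀ = t := by
    apply squarefree_eq_of_isSquare_mul hsf ht
    refine ⟨j, ?_⟩
    apply Nat.eq_of_mul_eq_mul_left (pow_pos hg 2)
    linear_combination hk
  subst htt
  refine ⟨g, s₀, m₀, hg, ?_, Nat.lt_of_mul_lt_mul_right hms, mul_comm _ _, mul_comm _ _, rfl⟩
  have : m₀ * g < m₀ * s₀ := by linarith
  exact Nat.lt_of_mul_lt_mul_left this

/-! ### Coordinates of integers -/

lemma isIntegral_congr {u v : ℝ} (h : IsIntegral ℤ u) (e : v = u) : IsIntegral ℤ v := e ▸ h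

lemma exists_int_of_isIntegral_ratCast {q : ℚ} (h : IsIntegral ℤ (q : ℝ)) : ∃ n : ℤ, q = n := by
  have h' : IsIntegral ℤ q := (isIntegral_algebraMap_iff (algebraMap ℚ ℝ).injective).1 h
  obtain ⟨n, hn⟩ := IsIntegrallyClosed.isIntegral_iff.1 h'
  exact ⟨n, by simpa using hn.symm⟩

/-- An algebraic integer `u + v√n` of a quadratic field, with `n` squarefree, has the form
`(U + V√n)/2` with `U² ≡ nV² (mod 4)`. -/
lemma quadratic_half_integers {n : ℕ} (hn : Squarefree n) {w : ℝ} (hw : w ^ 2 = n) {u v : ℚ}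
    (h1 : IsIntegral ℤ ((u : ℝ) + v * w)) (h2 : IsIntegral ℤ ((u : ℝ) - v * w)) :
    ∃ U V : ℤ, 2 * u = U ∧ 2 * v = V ∧ (4 : ℤ) ∣ U ^ 2 - n * V ^ 2 := by
  obtain ⟨U, hU⟩ := exists_int_of_isIntegral_ratCast (q := 2 * u) (by
    have := h1.add h2
    push_cast
    refine isIntegral_congr this ?_; ring)
  obtain ⟨N, hN⟩ := exists_int_of_isIntegral_ratCast (q := u ^ 2 - n * v ^ 2) (by
    have := h1.mul h2
    push_cast
    rw [← hw]
    refine isIntegral_congr this ?_; ring)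
  have hn0 : (n : ℚ) ≠ 0 := by exact_mod_cast hn.ne_zero
  have hk : (n : ℚ) * (2 * v) ^ 2 = ((U ^ 2 - 4 * N : ℤ) : ℚ) := by
    push_cast; rw [← hU, ← hN]; ring
  obtain ⟨j, hj⟩ := exists_int_of_isIntegral_ratCast (q := n * (2 * v)) (by
    apply IsIntegral.of_pow (n := 2) (by norm_num)
    have : (((n * (2 * v) : ℚ) : ℝ)) ^ 2 = algebraMap ℤ ℝ (n * (U ^ 2 - 4 * N)) := by
      have : ((n * (2 * v)) ^ 2 : ℚ) = ((n * (U ^ 2 - 4 * N) : ℤ) : ℚ) := by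
        rw [Int.cast_mul, ← hk]; push_cast; ring
      simp only [eq_intCast]
      exact_mod_cast this
    rw [this]
    exact isIntegral_algebraMap)
  have hdvd : (n : ℤ) ∣ j := by
    have hsf : Squarefree (n : ℤ) := Int.squarefree_natCast.2 hn
    rw [← hsf.dvd_pow_iff_dvd two_ne_zero]
    refine ⟨U ^ 2 - 4 * N, ?_⟩
    have : (j : ℚ) ^ 2 = n * ((U ^ 2 - 4 * N : ℤ) : ℚ) := by rw [← hk, ← hj]; ring
    exact_mod_cast this
  obtain ⟨V, rfl⟩ := hdvd
  have hV : 2 * v = V := by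
    push_cast at hj
    exact mul_left_cancel₀ hn0 hj
  refine ⟨U, V, hU, hV, N, ?_⟩
  rw [hV] at hk
  have : (n : ℤ) * V ^ 2 = U ^ 2 - 4 * N := by exact_mod_cast hk
  linarith

lemma squarefree_mod_four {n : ℕ} (hn : Squarefree n) : n % 4 ≠ 0 := by
  intro h
  have := hn 2 (by omega)
  simp at this

/-- For squarefree `n ≢ 1 (mod 4)` the algebraic integers of `ℚ(√n)` are the elements of
`ℤ[√n]`. -/
lemma quadratic_integers {n : ℕ} (hn : Squarefree n) (hn4 : n % 4 ≠ 1) {w : ℝ} (hw : w ^ 2 = n)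
    {u v : ℚ} (h1 : IsIntegral ℤ ((u : ℝ) + v * w)) (h2 : IsIntegral ℤ ((u : ℝ) - v * w)) :
    ∃ U V : ℤ, u = U ∧ v = V := by
  obtain ⟨U, V, hU, hV, h4⟩ := quadratic_half_integers hn hw h1 h2
  have hn4' := squarefree_mod_four hn
  have hUV : U % 2 = 0 ∧ V % 2 = 0 := by
    have hmod : (n : ℤ) % 4 = 2 ∨ (n : ℤ) % 4 = 3 := by omega
    obtain ⟨k, hk | hk⟩ : ∃ k : ℤ, (n : ℤ) = 4 * k + 2 ∨ (n : ℤ) = 4 * k + 3 :=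
      ⟨n / 4, by omega⟩
    all_goals
      obtain ⟨e, he⟩ := h4
      rw [hk] at he
      obtain ⟨U', rfl | rfl⟩ := Int.even_or_odd' U <;> obtain ⟨V', rfl | rfl⟩ := Int.even_or_odd' V
      · constructor <;> omega
      all_goals ring_nf at he; omega
  obtain ⟨U', rfl⟩ : ∃ U', U = 2 * U' := ⟨U / 2, by omega⟩
  obtain ⟨V', rfl⟩ : ∃ V', V = 2 * V' := ⟨V / 2, by omega⟩
  push_cast at hU hV
  exact ⟨U', V', by linarith, by linarith⟩

/-- Conjugation preserves integrality. The pairs `(u, σ u)`, where `σ` changes the signs of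
`x = √m`, `y = √s`, `z = √t` by `ε, δ, εδ`, are closed under integer polynomials, so a polynomial
killing `u` kills `σ u`. -/
lemma isIntegral_conj {t₀ s₀ m₀ : ℕ} {x y z : ℝ} (hx : x ^ 2 = ((t₀ * s₀ : ℕ) : ℝ))
    (hy : y ^ 2 = ((t₀ * m₀ : ℕ) : ℝ)) (hz : z ^ 2 = ((s₀ * m₀ : ℕ) : ℝ))
    (hxy : x * y = t₀ * z) (hxz : x * z = s₀ * y) (hyz : y * z = m₀ * x)
    (hind : ∀ a b c d : ℚ, (a : ℝ) + b * x + c * y + d * z = 0 → a = 0 ∧ b = 0 ∧ c = 0 ∧ d = 0)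
    {ε δ : ℝ} (hε : ε ^ 2 = 1) (hδ : δ ^ 2 = 1) {a b c d : ℚ}
    (h : IsIntegral ℤ ((a : ℝ) + b * x + c * y + d * z)) :
    IsIntegral ℤ ((a : ℝ) + ε * b * x + δ * c * y + ε * δ * d * z) := by
  obtain ⟨P, hP, hP0⟩ := h
  refine ⟨P, hP, ?_⟩
  have key : ∀ Q : Polynomial ℤ, ∃ a' b' c' d' : ℚ,
      Q.eval₂ (algebraMap ℤ ℝ) ((a : ℝ) + b * x + c * y + d * z) = a' + b' * x + c' * y + d' * z ∧
      Q.eval₂ (algebraMap ℤ ℝ) ((a : ℝ) + ε * b * x + δ * c * y + ε * δ * d * z) =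
        a' + ε * b' * x + δ * c' * y + ε * δ * d' * z := by
    intro Q
    induction Q using Polynomial.induction_on with
    | C n => exact ⟨n, 0, 0, 0, by rw [Polynomial.eval₂_C]; simp, by rw [Polynomial.eval₂_C]; simp⟩
    | add Q R hQ hR =>
      obtain ⟨a₁, b₁, c₁, d₁, e₁, f₁⟩ := hQ
      obtain ⟨a₂, b₂, c₂, d₂, e₂, f₂⟩ := hR
      refine ⟨a₁ + a₂, b₁ + b₂, c₁ + c₂, d₁ + d₂, ?_, ?_⟩
      · rw [Polynomial.eval₂_add, e₁, e₂]; push_cast; ring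
      · rw [Polynomial.eval₂_add, f₁, f₂]; push_cast; ring
    | monomial n k hQ =>
      obtain ⟨a', b', c', d', e, f⟩ := hQ
      refine ⟨a * a' + (t₀ * s₀ : ℕ) * (b * b') + (t₀ * m₀ : ℕ) * (c * c') +
          (s₀ * m₀ : ℕ) * (d * d'),
        a * b' + b * a' + m₀ * (c * d' + d * c'), a * c' + c * a' + s₀ * (b * d' + d * b'),
        a * d' + d * a' + t₀ * (b * c' + c * b'), ?_, ?_⟩
      · rw [pow_succ, ← mul_assoc, Polynomial.eval₂_mul, e, Polynomial.eval₂_X]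
        simp only [Rat.cast_add, Rat.cast_mul, Rat.cast_natCast]
        rw [← hx, ← hy, ← hz]
        linear_combination (b * c' + c * b' : ℝ) * hxy +
          (b * d' + d * b' : ℝ) * hxz + (c * d' + d * c' : ℝ) * hyz
      · rw [pow_succ, ← mul_assoc, Polynomial.eval₂_mul, f, Polynomial.eval₂_X]
        simp only [Rat.cast_add, Rat.cast_mul, Rat.cast_natCast]
        rw [← hx, ← hy, ← hz]
        linear_combination (ε * δ * (b * c' + c * b') : ℝ) * hxy +
          (ε ^ 2 * δ * (b * d' + d * b') : ℝ) * hxz + (ε * δ ^ 2 * (c * d' + d * c') : ℝ) * hyz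
          + (b * b' * x ^ 2 + δ ^ 2 * d * d' * z ^ 2 + δ * s₀ * (b * d' + d * b') * y) * hε
          + (c * c' * y ^ 2 + d * d' * z ^ 2 + ε * m₀ * (c * d' + d * c') * x) * hδ
  obtain ⟨a', b', c', d', e, f⟩ := key P
  rw [hP0] at e
  obtain ⟨rfl, rfl, rfl, rfl⟩ := hind a' b' c' d' e.symm
  rw [f]; simp

/-- The shape of the algebraic integers of `K` when `m ≢ 1 (mod 4)`: all four coordinates are
half-integers, and integrality of the relative norms to the quadratic subfields gives
congruences between the numerators. -/
lemma integer_coordinates {t₀ s₀ m₀ : ℕ} {x y z : ℝ} (hx : x ^ 2 = ((t₀ * s₀ : ℕ) : ℝ))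
    (hy : y ^ 2 = ((t₀ * m₀ : ℕ) : ℝ)) (hz : z ^ 2 = ((s₀ * m₀ : ℕ) : ℝ))
    (hxy : x * y = t₀ * z) (hxz : x * z = s₀ * y) (hyz : y * z = m₀ * x)
    (hind : ∀ a b c d : ℚ, (a : ℝ) + b * x + c * y + d * z = 0 → a = 0 ∧ b = 0 ∧ c = 0 ∧ d = 0)
    (hm : Squarefree (t₀ * s₀)) (hs : Squarefree (t₀ * m₀)) (ht : Squarefree (s₀ * m₀))
    (hm4 : (t₀ * s₀) % 4 ≠ 1) {a b c d : ℚ}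
    (h : IsIntegral ℤ ((a : ℝ) + b * x + c * y + d * z)) :
    ∃ a' b' c' d' : ℤ, 2 * a = a' ∧ 2 * b = b' ∧ 2 * c = c' ∧ 2 * d = d' ∧
      4 ∣ a' ^ 2 + t₀ * s₀ * b' ^ 2 - t₀ * m₀ * c' ^ 2 - s₀ * m₀ * d' ^ 2 ∧
      2 ∣ a' * b' - m₀ * c' * d' ∧
      ((t₀ * m₀) % 4 ≠ 1 →
        4 ∣ a' ^ 2 + t₀ * m₀ * c' ^ 2 - t₀ * s₀ * b' ^ 2 - s₀ * m₀ * d' ^ 2) ∧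
      ((s₀ * m₀) % 4 ≠ 1 →
        4 ∣ a' ^ 2 + s₀ * m₀ * d' ^ 2 - t₀ * s₀ * b' ^ 2 - t₀ * m₀ * c' ^ 2) := by
  have h1 := isIntegral_conj hx hy hz hxy hxz hyz hind (ε := 1) (δ := -1) (by norm_num)
    (by norm_num) h
  have h2 := isIntegral_conj hx hy hz hxy hxz hyz hind (ε := -1) (δ := 1) (by norm_num)
    (by norm_num) h
  have h3 := isIntegral_conj hx hy hz hxy hxz hyz hind (ε := -1) (δ := -1) (by norm_num)
    (by norm_num) h
  have even_of : ∀ {n : ℕ} {w : ℝ} {v : ℚ} {U : ℤ}, Squarefree n → w ^ 2 = n → 2 * a = U →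
      IsIntegral ℤ (((2 * a : ℚ) : ℝ) + (2 * v : ℚ) * w) →
      IsIntegral ℤ (((2 * a : ℚ) : ℝ) - (2 * v : ℚ) * w) → ∃ V : ℤ, 2 * v = V := by
    intro n w v U hn hw hU i1 i2
    obtain ⟨U', V, hU', hV, e, he⟩ := quadratic_half_integers hn hw i1 i2
    have hUU : U' = 2 * U := by
      have : (U' : ℚ) = ((2 * U : ℤ) : ℚ) := by rw [← hU']; push_cast; rw [← hU]
      exact_mod_cast this
    subst hUU
    have hn0 := squarefree_mod_four hn
    obtain ⟨V', rfl | rfl⟩ := Int.even_or_odd' V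
    · exact ⟨V', by push_cast at hV; linarith⟩
    · exfalso
      have : (n : ℤ) = 4 * (U ^ 2 - n * (V' ^ 2 + V') - e) := by linear_combination -he
      omega
  obtain ⟨a', b', ha, hb⟩ := quadratic_integers hm hm4 hx (u := 2 * a) (v := 2 * b)
    (by have := h.add h1; push_cast; refine isIntegral_congr this ?_; ring)
    (by have := h2.add h3; push_cast; refine isIntegral_congr this ?_; ring)
  obtain ⟨c', hc⟩ := even_of (v := c) hs hy ha
    (by have := h.add h2; push_cast; refine isIntegral_congr this ?_; ring)
    (by have := h1.add h3; push_cast; refine isIntegral_congr this ?_; ring)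
  obtain ⟨d', hd⟩ := even_of (v := d) ht hz ha
    (by have := h.add h3; push_cast; refine isIntegral_congr this ?_; ring)
    (by have := h1.add h2; push_cast; refine isIntegral_congr this ?_; ring)
  refine ⟨a', b', c', d', ha, hb, hc, hd, ?_⟩
  obtain ⟨A, B, hA, hB⟩ := quadratic_integers hm hm4 hx
    (u := a ^ 2 + (t₀ * s₀ : ℕ) * b ^ 2 - (t₀ * m₀ : ℕ) * c ^ 2 - (s₀ * m₀ : ℕ) * d ^ 2)
    (v := 2 * (a * b - m₀ * c * d))
    (by
      have := h.mul h1
      simp only [Rat.cast_add, Rat.cast_sub, Rat.cast_mul, Rat.cast_natCast, Rat.cast_pow]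
      rw [← hx, ← hy, ← hz]
      refine isIntegral_congr this ?_
      push_cast
      linear_combination (2 * c * d : ℝ) * hyz)
    (by
      have := h2.mul h3
      simp only [Rat.cast_add, Rat.cast_sub, Rat.cast_mul, Rat.cast_natCast, Rat.cast_pow]
      rw [← hx, ← hy, ← hz]
      refine isIntegral_congr this ?_
      push_cast
      linear_combination (-2 * c * d : ℝ) * hyz)
  have hcast : ∀ {X Y : ℤ}, (X : ℚ) = Y → X = Y := fun h => by exact_mod_cast h
  refine ⟨⟨A, hcast ?_⟩, ⟨B, hcast ?_⟩, fun hs4 => ?_, fun ht4 => ?_⟩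
  · push_cast at hA ⊢; rw [← hA, ← ha, ← hb, ← hc, ← hd]; ring
  · push_cast at hB ⊢; rw [← hB, ← ha, ← hb, ← hc, ← hd]; ring
  · obtain ⟨A, B, hA, hB⟩ := quadratic_integers hs hs4 hy
      (u := a ^ 2 + (t₀ * m₀ : ℕ) * c ^ 2 - (t₀ * s₀ : ℕ) * b ^ 2 - (s₀ * m₀ : ℕ) * d ^ 2)
      (v := 2 * (a * c - s₀ * b * d))
      (by
        have := h.mul h2
        simp only [Rat.cast_add, Rat.cast_sub, Rat.cast_mul, Rat.cast_natCast, Rat.cast_pow]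
        rw [← hx, ← hy, ← hz]
        refine isIntegral_congr this ?_
        push_cast
        linear_combination (2 * b * d : ℝ) * hxz)
      (by
        have := h1.mul h3
        simp only [Rat.cast_add, Rat.cast_sub, Rat.cast_mul, Rat.cast_natCast, Rat.cast_pow]
        rw [← hx, ← hy, ← hz]
        refine isIntegral_congr this ?_
        push_cast
        linear_combination (-2 * b * d : ℝ) * hxz)
    refine ⟨A, hcast ?_⟩
    push_cast at hA ⊢; rw [← hA, ← ha, ← hb, ← hc, ← hd]; ring
  · obtain ⟨A, B, hA, hB⟩ := quadratic_integers ht ht4 hz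
      (u := a ^ 2 + (s₀ * m₀ : ℕ) * d ^ 2 - (t₀ * s₀ : ℕ) * b ^ 2 - (t₀ * m₀ : ℕ) * c ^ 2)
      (v := 2 * (a * d - t₀ * b * c))
      (by
        have := h.mul h3
        simp only [Rat.cast_add, Rat.cast_sub, Rat.cast_mul, Rat.cast_natCast, Rat.cast_pow]
        rw [← hx, ← hy, ← hz]
        refine isIntegral_congr this ?_
        push_cast
        linear_combination (2 * b * c : ℝ) * hxy)
      (by
        have := h1.mul h2
        simp only [Rat.cast_add, Rat.cast_sub, Rat.cast_mul, Rat.cast_natCast, Rat.cast_pow]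
        rw [← hx, ← hy, ← hz]
        refine isIntegral_congr this ?_
        push_cast
        linear_combination (-2 * b * c : ℝ) * hxy)
    refine ⟨A, hcast ?_⟩
    push_cast at hA ⊢; rw [← hA, ← ha, ← hb, ← hc, ← hd]; ring

/-! ### Integer vectors of small norm -/

lemma eq_zero_of_sum_sq_eq_zero {b : Fin 4 → ℤ} (h : ∑ i, b i ^ 2 = 0) : b = 0 := by
  rw [Finset.sum_eq_zero_iff_of_nonneg (fun _ _ => sq_nonneg _)] at h
  funext i
  simpa using h i (Finset.mem_univ i)

lemma sum_sq_nonneg (b : Fin 4 → ℤ) : 0 ≤ ∑ i, b i ^ 2 :=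
  Finset.sum_nonneg fun _ _ => sq_nonneg _

lemma sq_le_sum_sq (b : Fin 4 → ℤ) (i : Fin 4) : b i ^ 2 ≤ ∑ i, b i ^ 2 :=
  Finset.single_le_sum (f := fun i => b i ^ 2) (fun _ _ => sq_nonneg _) (Finset.mem_univ i)

/-- An integer vector of norm `1` is a signed unit vector. -/
lemma unit_of_sum_sq_eq_one {b : Fin 4 → ℤ} (h : ∑ i, b i ^ 2 = 1) :
    ∃ i, (b i = 1 ∨ b i = -1) ∧ (∀ j, j ≠ i → b j = 0) ∧
      ∀ x : Fin 4 → ℤ, ∑ j, b j * x j = b i * x i := by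
  obtain ⟨i, hi⟩ : ∃ i, b i ≠ 0 := by
    by_contra hb
    push Not at hb
    simp [hb] at h
  have hsplit := Finset.add_sum_erase Finset.univ (fun j => b j ^ 2) (Finset.mem_univ i)
  simp only [h] at hsplit
  have hge : 1 ≤ b i ^ 2 := by
    have := sq_nonneg (b i)
    have : b i ^ 2 ≠ 0 := pow_ne_zero 2 hi
    omega
  have hrest : 0 ≤ ∑ j ∈ Finset.univ.erase i, b j ^ 2 := Finset.sum_nonneg fun j _ => sq_nonneg _
  have hz : ∑ j ∈ Finset.univ.erase i, b j ^ 2 = 0 := by omega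
  rw [Finset.sum_eq_zero_iff_of_nonneg (fun _ _ => sq_nonneg _)] at hz
  have hz' : ∀ j, j ≠ i → b j = 0 := fun j hj => by
    simpa using hz j (by simp [hj])
  refine ⟨i, mul_self_eq_one_iff.1 ?_, hz', fun x => ?_⟩
  · rw [← sq]; omega
  · exact Finset.sum_eq_single i (fun j _ hj => by simp [hz' j hj]) (by simp)

lemma exists_half {b : Fin 4 → ℤ} (h : ∀ i, b i % 2 = 0) : ∃ b' : Fin 4 → ℤ, b = fun i => 2 * b' i :=
  ⟨fun i => b i / 2, by funext i; have := h i; simp only; omega⟩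

lemma sum_sq_half (b' : Fin 4 → ℤ) : ∑ i, (2 * b' i) ^ 2 = 4 * ∑ i, b' i ^ 2 := by
  rw [Finset.mul_sum]; exact Finset.sum_congr rfl fun i _ => by ring

lemma sum_sq_dvd_of_even {b : Fin 4 → ℤ} (h : ∀ i, b i % 2 = 0) : (4 : ℤ) ∣ ∑ i, b i ^ 2 := by
  obtain ⟨b', rfl⟩ := exists_half h
  exact ⟨_, sum_sq_half b'⟩

/-- Coordinatewise congruent vectors modulo `2` have the same norm modulo `4`. -/
lemma sum_sq_congr {b d : Fin 4 → ℤ} (h : ∀ i, b i % 2 = d i % 2) :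
    (4 : ℤ) ∣ ∑ i, b i ^ 2 - ∑ i, d i ^ 2 := by
  rw [← Finset.sum_sub_distrib]
  apply Finset.dvd_sum
  intro i _
  obtain ⟨k, hk⟩ : ∃ k, b i = d i + 2 * k := ⟨(b i - d i) / 2, by have := h i; omega⟩
  rw [hk]
  exact ⟨d i * k + k ^ 2, by ring⟩

/-- Seven is not a sum of three squares: a vector of norm `8` has no entry `±1`. -/
lemma no_unit_entry_of_norm_eight {a : Fin 4 → ℤ} (h : ∑ i, a i ^ 2 = 8) (i : Fin 4)
    (hi : a i ^ 2 = 1) : False := by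
  have key : ∀ x y z : ZMod 8, x ^ 2 + y ^ 2 + z ^ 2 ≠ 7 := by decide
  have hsum : ∀ x y z : ℤ, x ^ 2 + y ^ 2 + z ^ 2 ≠ 7 := by
    intro x y z hxyz
    apply key x y z
    exact_mod_cast congrArg (Int.cast : ℤ → ZMod 8) hxyz
  rw [Fin.sum_univ_four] at h
  fin_cases i <;> simp only [Fin.zero_eta, Fin.mk_one, Fin.reduceFinMk] at hi
  · exact hsum (a 1) (a 2) (a 3) (by linarith)
  · exact hsum (a 0) (a 2) (a 3) (by linarith)
  · exact hsum (a 0) (a 1) (a 3) (by linarith)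
  · exact hsum (a 0) (a 1) (a 2) (by linarith)

/-- There is no representation of `7 + (1 + √m)²` inside `ℤ[√m]`. -/
lemma no_rep_quadratic {m : ℤ} (hm : 10 ≤ m) {a b : Fin 4 → ℤ}
    (ha : ∀ i, a i % 2 = 0) (hb : ∀ i, b i % 2 = 0)
    (h0 : ∑ i, a i ^ 2 + m * ∑ i, b i ^ 2 = 32 + 4 * m) (h1 : ∑ i, a i * b i = 4) : False := by
  obtain ⟨a, rfl⟩ := exists_half ha
  obtain ⟨b, rfl⟩ := exists_half hb
  rw [sum_sq_half, sum_sq_half] at h0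
  have h1' : ∑ i, b i * a i = 1 := by
    beta_reduce at h1
    have : ∑ i, 2 * a i * (2 * b i) = 4 * ∑ i, b i * a i := by
      rw [Finset.mul_sum]; exact Finset.sum_congr rfl fun i _ => by ring
    omega
  have hA := sum_sq_nonneg a
  have hB : ∑ i, b i ^ 2 = 1 := by
    have hB := sum_sq_nonneg b
    have hB0 : ∑ i, b i ^ 2 ≠ 0 := fun h => by
      rw [eq_zero_of_sum_sq_eq_zero h] at h1'; simp at h1'
    by_contra hne
    have : 2 ≤ ∑ i, b i ^ 2 := by omega
    nlinarith
  obtain ⟨i, hi, -, hsum⟩ := unit_of_sum_sq_eq_one hB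
  rw [hsum] at h1'
  apply no_unit_entry_of_norm_eight (a := a) (by rw [hB] at h0; linarith) i
  rcases hi with hi | hi <;> rw [hi] at h1'
  · rw [show a i = 1 by linarith]; norm_num
  · rw [show a i = -1 by linarith]; norm_num

/-- The `√m`-coordinates cannot all vanish: otherwise `m₀ ∣ 4`. -/
lemma norm_b_pos {q r : ℤ} (hq : 5 ≤ q) (hqr : q < r) {a b c d : Fin 4 → ℤ}
    (h1 : ∑ i, a i * b i + r * ∑ i, c i * d i = 4) : 1 ≤ ∑ i, b i ^ 2 := by
  by_contra hB
  have hB : ∑ i, b i ^ 2 = 0 := by have := sum_sq_nonneg b; omega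
  rw [eq_zero_of_sum_sq_eq_zero hB] at h1
  simp only [Pi.zero_apply, mul_zero, Finset.sum_const_zero, zero_add] at h1
  have := Int.le_of_dvd (by norm_num) (Dvd.intro _ h1)
  omega

/-- Representations with coordinates only at `1`, `√m`, `√n`, where the coordinates at `1` are
integers and those at `√m`, `√n` are simultaneously half-odd, force `n ≤ m + 12`. -/
lemma close_of_rep {m n : ℤ} (hm : 10 ≤ m) (hn : m + 4 ≤ n) {a b d : Fin 4 → ℤ}
    (ha : ∀ i, a i % 2 = 0) (hbd : ∀ i, b i % 2 = d i % 2)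
    (h0 : ∑ i, a i ^ 2 + m * ∑ i, b i ^ 2 + n * ∑ i, d i ^ 2 = 32 + 4 * m)
    (h1 : ∑ i, a i * b i = 4) (h2 : ∑ i, b i * d i = 0)
    (hB : 1 ≤ ∑ i, b i ^ 2) (hD : 1 ≤ ∑ i, d i ^ 2) : n ≤ m + 12 := by
  obtain ⟨a, rfl⟩ := exists_half ha
  rw [sum_sq_half] at h0
  have h1' : ∑ i, a i * b i = 2 := by
    beta_reduce at h1
    have : ∑ i, 2 * a i * b i = 2 * ∑ i, a i * b i := by
      rw [Finset.mul_sum]; exact Finset.sum_congr rfl fun i _ => by ring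
    omega
  have hcs : (∑ i, a i * b i) ^ 2 ≤ (∑ i, a i ^ 2) * ∑ i, b i ^ 2 :=
    Finset.sum_mul_sq_le_sq_mul_sq _ _ _
  have h4 := sum_sq_congr hbd
  have hB1 : ∑ i, b i ^ 2 ≠ 1 := fun h => by
    obtain ⟨i, hi, -, hs⟩ := unit_of_sum_sq_eq_one h
    rw [hs] at h2
    have := hbd i
    rcases hi with hi | hi <;> rw [hi] at h2 this <;> omega
  have hD1 : ∑ i, d i ^ 2 ≠ 1 := fun h => by
    obtain ⟨i, hi, -, hs⟩ := unit_of_sum_sq_eq_one h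
    have h2' : ∑ i, d i * b i = 0 := by rw [← h2]; exact Finset.sum_congr rfl fun i _ => mul_comm _ _
    rw [hs] at h2'
    have := hbd i
    rcases hi with hi | hi <;> rw [hi] at h2' this <;> omega
  rw [h1'] at hcs
  have hA := sum_sq_nonneg a
  generalize ∑ i, a i ^ 2 = A at *
  generalize ∑ i, b i ^ 2 = B at *
  generalize ∑ i, d i ^ 2 = D at *
  have hA1 : 1 ≤ A := by
    by_contra hA1
    have : A = 0 := by omega
    subst this
    norm_num at hcs
  have hnD : (m + 4) * D ≤ n * D := mul_le_mul_of_nonneg_right hn (by omega)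
  -- `B ≡ D (mod 4)` leaves only `B = D = 2` below the trace bound
  have hB2 : B = 2 := by
    by_contra hB2
    by_cases hB6 : 6 ≤ B
    · nlinarith
    · have hD3 : 3 ≤ D := by omega
      have hB3 : 3 ≤ B := by omega
      nlinarith
  have hD2 : D = 2 := by
    by_contra hD2
    have : 6 ≤ D := by omega
    nlinarith
  subst hB2 hD2
  linarith

/-! ### The quadratic system for `7 + (1 + √m)²` -/

/-- The case `s ≡ t ≡ 2`, `m ≡ 3 (mod 4)`. -/
lemma no_rep_m_odd {m s t q r : ℤ} (hm : 10 ≤ m) (hms : m < s) (ht30 : 30 ≤ t)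
    (hq : 5 ≤ q) (hqr : q < r) {a b c d : Fin 4 → ℤ}
    (ha : ∀ i, a i % 2 = 0) (hb : ∀ i, b i % 2 = 0) (hcd : ∀ i, c i % 2 = d i % 2)
    (h0 : ∑ i, a i ^ 2 + m * ∑ i, b i ^ 2 + s * ∑ i, c i ^ 2 + t * ∑ i, d i ^ 2 = 32 + 4 * m)
    (h1 : ∑ i, a i * b i + r * ∑ i, c i * d i = 4) : False := by
  have hB := norm_b_pos hq hqr h1
  have hB4 := sum_sq_dvd_of_even hb
  have h4 := sum_sq_congr hcd
  have hA := sum_sq_nonneg a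
  have hC := sum_sq_nonneg c
  have hD := sum_sq_nonneg d
  by_cases hCD : ∑ i, c i ^ 2 = 0 ∧ ∑ i, d i ^ 2 = 0
  · rw [eq_zero_of_sum_sq_eq_zero hCD.1] at h1
    rw [hCD.1, hCD.2] at h0
    exact no_rep_quadratic hm ha hb (by linarith) (by simpa using h1)
  · generalize ∑ i, a i ^ 2 = A at *
    generalize ∑ i, b i ^ 2 = B at *
    generalize ∑ i, c i ^ 2 = C at *
    generalize ∑ i, d i ^ 2 = D at *
    have hB' : 4 ≤ B := by omega
    have hmB : m * 4 ≤ m * B := mul_le_mul_of_nonneg_left hB' (by omega)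
    rcases (show 4 ≤ C ∨ 4 ≤ D ∨ (1 ≤ C ∧ 1 ≤ D) by omega) with h | h | ⟨h, h'⟩ <;> nlinarith

/-- The case `m ≡ t ≡ 2`, `s ≡ 3 (mod 4)`. -/
lemma rep_s_three {m s t p q r : ℤ} (hm : 10 ≤ m) (hms : m < s) (ht30 : 30 ≤ t)
    (hmt : m + 4 ≤ t) (hpq : p < q) (hq : 5 ≤ q) (hqr : q < r) (hq2 : q % 2 = 0)
    (em : m = p * q) (es : s = p * r) (et : t = q * r) {a b c d : Fin 4 → ℤ}
    (ha : ∀ i, a i % 2 = 0) (hc : ∀ i, c i % 2 = 0) (hbd : ∀ i, b i % 2 = d i % 2)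
    (h0 : ∑ i, a i ^ 2 + m * ∑ i, b i ^ 2 + s * ∑ i, c i ^ 2 + t * ∑ i, d i ^ 2 = 32 + 4 * m)
    (h1 : ∑ i, a i * b i + r * ∑ i, c i * d i = 4)
    (h2 : ∑ i, a i * c i + q * ∑ i, b i * d i = 0) : m = 30 ∧ s = 35 := by
  have hB := norm_b_pos hq hqr h1
  have hC4 := sum_sq_dvd_of_even hc
  have h4 := sum_sq_congr hbd
  have hA := sum_sq_nonneg a
  have hC := sum_sq_nonneg c
  have hD := sum_sq_nonneg d
  by_cases hC0 : ∑ i, c i ^ 2 = 0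
  · have hc0 := eq_zero_of_sum_sq_eq_zero hC0
    subst hc0
    simp only [Pi.zero_apply, zero_mul, mul_zero, Finset.sum_const_zero, add_zero, zero_add,
      ne_eq, OfNat.ofNat_ne_zero, not_false_eq_true, zero_pow, mul_eq_zero] at h0 h1 h2
    replace h2 := h2.resolve_left (by omega)
    by_cases hD0 : ∑ i, d i ^ 2 = 0
    · have hd0 := eq_zero_of_sum_sq_eq_zero hD0
      subst hd0
      exact (no_rep_quadratic hm ha (by simpa using hbd) (by simpa using h0) h1).elim
    · have := close_of_rep hm hmt ha hbd h0 h1 h2 hB (by omega)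
      -- `t - m = q (r - p) ≤ 12` with `q ≥ 6` even forces `(p, q, r) = (5, 6, 7)`
      have h12 : q * (r - p) ≤ 12 := by nlinarith
      have hq6' : 6 ≤ q := by omega
      have hq6 : q = 6 := by nlinarith
      subst hq6
      have hr : r = 7 := by omega
      have hp : p = 5 := by omega
      subst hr hp
      omega
  · exfalso
    generalize ∑ i, a i ^ 2 = A at *
    generalize ∑ i, b i ^ 2 = B at *
    generalize ∑ i, c i ^ 2 = C at *
    generalize ∑ i, d i ^ 2 = D at *
    have hC' : 4 ≤ C := by omega
    have hsC : s * 4 ≤ s * C := mul_le_mul_of_nonneg_left hC' (by omega)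
    rcases (show 4 ≤ B ∨ (1 ≤ B ∧ 1 ≤ D) by omega) with h | ⟨h, h'⟩ <;> nlinarith

/-- The case `m ≡ s ≡ 2`, `t ≡ 3 (mod 4)`. -/
lemma no_rep_t_three {m s t p q r : ℤ} (hm : 10 ≤ m) (hms : m + 16 ≤ s) (hst : s < t)
    (hp : 0 < p) (hq : 5 ≤ q) (hqr : q < r) {a b c d : Fin 4 → ℤ}
    (ha : ∀ i, a i % 2 = 0) (hd : ∀ i, d i % 2 = 0) (hbc : ∀ i, b i % 2 = c i % 2)
    (h0 : ∑ i, a i ^ 2 + m * ∑ i, b i ^ 2 + s * ∑ i, c i ^ 2 + t * ∑ i, d i ^ 2 = 32 + 4 * m)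
    (h1 : ∑ i, a i * b i + r * ∑ i, c i * d i = 4)
    (h3 : ∑ i, a i * d i + p * ∑ i, b i * c i = 0) : False := by
  have hB := norm_b_pos hq hqr h1
  have hD4 := sum_sq_dvd_of_even hd
  have h4 := sum_sq_congr hbc
  have hA := sum_sq_nonneg a
  have hC := sum_sq_nonneg c
  have hD := sum_sq_nonneg d
  by_cases hD0 : ∑ i, d i ^ 2 = 0
  · have hd0 := eq_zero_of_sum_sq_eq_zero hD0
    subst hd0
    simp only [Pi.zero_apply, mul_zero, Finset.sum_const_zero, add_zero, zero_add,
      ne_eq, OfNat.ofNat_ne_zero, not_false_eq_true, zero_pow, mul_eq_zero] at h0 h1 h3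
    replace h3 := h3.resolve_left (by omega)
    by_cases hC0 : ∑ i, c i ^ 2 = 0
    · have hc0 := eq_zero_of_sum_sq_eq_zero hC0
      subst hc0
      exact no_rep_quadratic hm ha (by simpa using hbc) (by simpa using h0) h1
    · have := close_of_rep hm (by omega) ha hbc h0 h1 h3 hB (by omega)
      omega
  · generalize ∑ i, a i ^ 2 = A at *
    generalize ∑ i, b i ^ 2 = B at *
    generalize ∑ i, c i ^ 2 = C at *
    generalize ∑ i, d i ^ 2 = D at *
    have hD' : 4 ≤ D := by omega
    have htD : t * 4 ≤ t * D := mul_le_mul_of_nonneg_left hD' (by omega)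
    nlinarith

lemma isUnit_sq {e : ℤ} (h : e = 1 ∨ e = -1) : e ^ 2 = 1 := by
  rcases h with rfl | rfl <;> norm_num

/-- The case `s ≡ 1 (mod 4)`. -/
lemma rep_s_one {m s t p q r : ℤ} (hm : 10 ≤ m) (hm4 : m % 4 ≠ 0) (hms : m < s)
    (hs4 : s % 4 = 1) (ht30 : 30 ≤ t)
    (hp : 0 < p) (hpq : p < q) (hq : 5 ≤ q) (hqr : q < r) (hp2 : p % 2 = 1) (hpr : r % 4 = p % 4)
    (em : m = p * q) (es : s = p * r) (et : t = q * r) {a b c d : Fin 4 → ℤ}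
    (hac : ∀ i, a i % 2 = c i % 2) (hbd : ∀ i, b i % 2 = d i % 2)
    (h0 : ∑ i, a i ^ 2 + m * ∑ i, b i ^ 2 + s * ∑ i, c i ^ 2 + t * ∑ i, d i ^ 2 = 32 + 4 * m)
    (h1 : ∑ i, a i * b i + r * ∑ i, c i * d i = 4)
    (h2 : ∑ i, a i * c i + q * ∑ i, b i * d i = 0)
    (h3 : ∑ i, a i * d i + p * ∑ i, b i * c i = 0) : s = 13 ∧ (m = 10 ∨ m = 11) := by
  have hB := norm_b_pos hq hqr h1
  have h4 := sum_sq_congr hbd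
  have hA := sum_sq_nonneg a
  have hC := sum_sq_nonneg c
  have hD := sum_sq_nonneg d
  have hC1 : ∑ i, c i ^ 2 = 1 → ∃ i, (c i = 1 ∨ c i = -1) ∧ ∑ i, a i * c i = c i * a i := by
    intro h
    obtain ⟨i, hi, -, hs⟩ := unit_of_sum_sq_eq_one h
    exact ⟨i, hi, by rw [← hs]; exact Finset.sum_congr rfl fun i _ => mul_comm _ _⟩
  by_cases hD0 : ∑ i, d i ^ 2 = 0
  · have hd0 := eq_zero_of_sum_sq_eq_zero hD0
    subst hd0
    simp only [Pi.zero_apply, mul_zero, Finset.sum_const_zero, add_zero, zero_add, mul_eq_zero,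
      ne_eq, OfNat.ofNat_ne_zero, not_false_eq_true, zero_pow, sub_zero] at h0 h1 h2 h3 h4
    by_cases hC0 : ∑ i, c i ^ 2 = 0
    · have hc0 := eq_zero_of_sum_sq_eq_zero hC0
      subst hc0
      exact (no_rep_quadratic hm (by simpa using hac) (by simpa using hbd) (by simpa using h0)
        h1).elim
    · have hC1' : ∑ i, c i ^ 2 ≠ 1 := by
        intro h
        obtain ⟨i, hi, hs⟩ := hC1 h
        rw [hs] at h2
        have := hac i
        rcases hi with hi | hi <;> rw [hi] at h2 this <;> omega
      generalize ∑ i, a i ^ 2 = A at *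
      generalize ∑ i, b i ^ 2 = B at *
      generalize ∑ i, c i ^ 2 = C at *
      have hmB : m * 4 ≤ m * B := mul_le_mul_of_nonneg_left (by omega) (by omega)
      have hsC : s * 2 ≤ s * C := mul_le_mul_of_nonneg_left (by omega) (by omega)
      omega
  · exfalso
    obtain ⟨k, hk⟩ : ∃ k, r = p + 4 * k := ⟨(r - p) / 4, by omega⟩
    have hk1 : 1 ≤ k := by omega
    have htm : m + 20 ≤ t := by
      subst em et hk
      nlinarith
    by_cases hBD : ∑ i, b i ^ 2 = 1 ∧ ∑ i, d i ^ 2 = 1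
    · obtain ⟨i, hi, hi0, hbs⟩ := unit_of_sum_sq_eq_one hBD.1
      obtain ⟨j, hj, hj0, hds⟩ := unit_of_sum_sq_eq_one hBD.2
      have hij : i = j := by
        by_contra hij
        have := hbd i
        rw [hj0 i hij] at this
        rcases hi with hi | hi <;> rw [hi] at this <;> omega
      subst hij
      have e1 : ∑ i, a i * b i = b i * a i := by
        rw [← hbs]; exact Finset.sum_congr rfl fun i _ => mul_comm _ _
      have e2 : ∑ i, c i * d i = d i * c i := by
        rw [← hds]; exact Finset.sum_congr rfl fun i _ => mul_comm _ _
      have e3 : ∑ i, a i * d i = d i * a i := by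
        rw [← hds]; exact Finset.sum_congr rfl fun i _ => mul_comm _ _
      rw [hBD.1, hBD.2] at h0
      rw [e1, e2] at h1
      rw [hbs] at h2
      rw [e3, hbs] at h3
      have hbi := isUnit_sq hi
      have hdi := isUnit_sq hj
      have hai : a i = -(p * (b i * d i) * c i) := by
        linear_combination (d i) * h3 - (a i) * hdi
      have hkc : k * (d i * c i) = 1 := by
        have : 4 * (k * (d i * c i)) = 4 := by
          rw [hai, hk] at h1
          linear_combination h1 + p * d i * c i * hbi
        omega
      have hk' : k = 1 := by
        rcases Int.eq_one_or_neg_one_of_mul_eq_one hkc with h | h <;> omega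
      subst hk'
      have hci : c i = d i := by linear_combination (d i) * hkc - c i * hdi
      have hai' : a i = -(p * b i) := by
        rw [hai, hci]; linear_combination -p * b i * hdi
      have hA2 : p ^ 2 ≤ ∑ i, a i ^ 2 := by
        have := sq_le_sum_sq a i
        rw [hai'] at this
        linear_combination this - p ^ 2 * hbi
      have hC2 : ∑ i, c i ^ 2 ≠ 1 := by
        intro h
        obtain ⟨j, hj, hj0, hcs⟩ := unit_of_sum_sq_eq_one h
        have hij : i = j := by
          by_contra hij
          rw [hj0 i hij] at hci
          rw [← hci] at hdi
          norm_num at hdi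
        subst hij
        have e4 : ∑ i, a i * c i = c i * a i := by
          rw [← hcs]; exact Finset.sum_congr rfl fun i _ => mul_comm _ _
        rw [e4, hai', hci] at h2
        have : q = p := by
          linear_combination b i * d i * h2 - (q - p) * b i ^ 2 * hdi - (q - p) * hbi
        omega
      have hC0 : ∑ i, c i ^ 2 ≠ 0 := by
        intro h
        have := congrFun (eq_zero_of_sum_sq_eq_zero h) i
        rw [hci] at this
        simp only [Pi.zero_apply] at this
        rw [this] at hdi
        norm_num at hdi
      have hsC : s * 2 ≤ s * ∑ i, c i ^ 2 := mul_le_mul_of_nonneg_left (by omega) (by omega)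
      have hbound : p ^ 2 + 2 * s + t ≤ 32 + 3 * m := by linarith
      have hq' : q ≤ p + 3 := by omega
      have : p ^ 2 + 2 * p + 4 * q ≤ 32 := by
        subst em es et hk
        nlinarith
      have hp3 : p < 3 := by nlinarith
      have : p = 1 := by omega
      omega
    · generalize ∑ i, a i ^ 2 = A at *
      generalize ∑ i, b i ^ 2 = B at *
      generalize ∑ i, c i ^ 2 = C at *
      generalize ∑ i, d i ^ 2 = D at *
      have hsC : 0 ≤ s * C := mul_nonneg (by omega) hC
      rcases (show 5 ≤ B ∧ 1 ≤ D ∨ 5 ≤ D ∨ (2 ≤ B ∧ 2 ≤ D) by omega) with ⟨h, h'⟩ | h | ⟨h, h'⟩ <;>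
        nlinarith

/-- The case `t ≡ 1 (mod 4)`. -/
lemma no_rep_t_one {m s t p q r : ℤ} (hm : 10 ≤ m) (hms : m + 16 ≤ s) (ht30 : 30 ≤ t)
    (hp : 0 < p) (hpq : p < q) (hq : 5 ≤ q) (hqr : q < r) (hqr4 : r % 4 = q % 4)
    (em : m = p * q) (es : s = p * r) (et : t = q * r) {a b c d : Fin 4 → ℤ}
    (had : ∀ i, a i % 2 = d i % 2) (hbc : ∀ i, b i % 2 = c i % 2)
    (h0 : ∑ i, a i ^ 2 + m * ∑ i, b i ^ 2 + s * ∑ i, c i ^ 2 + t * ∑ i, d i ^ 2 = 32 + 4 * m)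
    (h1 : ∑ i, a i * b i + r * ∑ i, c i * d i = 4)
    (h2 : ∑ i, a i * c i + q * ∑ i, b i * d i = 0)
    (h3 : ∑ i, a i * d i + p * ∑ i, b i * c i = 0) : False := by
  have hB := norm_b_pos hq hqr h1
  have h4 := sum_sq_congr hbc
  have hA := sum_sq_nonneg a
  have hC := sum_sq_nonneg c
  have hD := sum_sq_nonneg d
  by_cases hC0 : ∑ i, c i ^ 2 = 0
  · have hc0 := eq_zero_of_sum_sq_eq_zero hC0
    subst hc0
    simp only [Pi.zero_apply, zero_mul, mul_zero, Finset.sum_const_zero, add_zero, zero_add,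
      ne_eq, OfNat.ofNat_ne_zero, not_false_eq_true, zero_pow, sub_zero] at h0 h1 h2 h3 h4
    by_cases hD0 : ∑ i, d i ^ 2 = 0
    · have hd0 := eq_zero_of_sum_sq_eq_zero hD0
      subst hd0
      exact no_rep_quadratic hm (by simpa using had) (by simpa using hbc) (by simpa using h0) h1
    · have hD1' : ∑ i, d i ^ 2 ≠ 1 := by
        intro h
        obtain ⟨i, hi, -, hs⟩ := unit_of_sum_sq_eq_one h
        have e : ∑ i, a i * d i = d i * a i := by
          rw [← hs]; exact Finset.sum_congr rfl fun i _ => mul_comm _ _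
        rw [e] at h3
        have := had i
        rcases hi with hi | hi <;> rw [hi] at h3 this <;> omega
      generalize ∑ i, a i ^ 2 = A at *
      generalize ∑ i, b i ^ 2 = B at *
      generalize ∑ i, d i ^ 2 = D at *
      have hmB : m * 4 ≤ m * B := mul_le_mul_of_nonneg_left (by omega) (by omega)
      have htD : t * 2 ≤ t * D := mul_le_mul_of_nonneg_left (by omega) (by omega)
      omega
  · obtain ⟨k, hk⟩ : ∃ k, r = q + 4 * k := ⟨(r - q) / 4, by omega⟩
    have hk1 : 1 ≤ k := by omega
    by_cases hBC : ∑ i, b i ^ 2 = 1 ∧ ∑ i, c i ^ 2 = 1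
    · obtain ⟨i, hi, hi0, hbs⟩ := unit_of_sum_sq_eq_one hBC.1
      obtain ⟨j, hj, hj0, hcs⟩ := unit_of_sum_sq_eq_one hBC.2
      have hij : i = j := by
        by_contra hij
        have := hbc i
        rw [hj0 i hij] at this
        rcases hi with hi | hi <;> rw [hi] at this <;> omega
      subst hij
      have e1 : ∑ i, a i * b i = b i * a i := by
        rw [← hbs]; exact Finset.sum_congr rfl fun i _ => mul_comm _ _
      have e3 : ∑ i, a i * c i = c i * a i := by
        rw [← hcs]; exact Finset.sum_congr rfl fun i _ => mul_comm _ _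
      rw [hBC.1, hBC.2] at h0
      rw [e1, hcs] at h1
      rw [e3, hbs] at h2
      rw [hbs] at h3
      have hbi := isUnit_sq hi
      have hci := isUnit_sq hj
      have hai : a i = -(q * (b i * c i) * d i) := by
        linear_combination (c i) * h2 - (a i) * hci
      have hkc : k * (c i * d i) = 1 := by
        have : 4 * (k * (c i * d i)) = 4 := by
          rw [hai, hk] at h1
          linear_combination h1 + q * d i * c i * hbi
        omega
      have hk' : k = 1 := by
        rcases Int.eq_one_or_neg_one_of_mul_eq_one hkc with h | h <;> omega
      subst hk'
      have hdi : d i = c i := by linear_combination (c i) * hkc - d i * hci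
      have hai' : a i = -(q * b i) := by
        rw [hai, hdi]; linear_combination -q * b i * hci
      have hA2 : q ^ 2 ≤ ∑ i, a i ^ 2 := by
        have := sq_le_sum_sq a i
        rw [hai'] at this
        linear_combination this - q ^ 2 * hbi
      have hD2 : ∑ i, d i ^ 2 ≠ 1 := by
        intro h
        obtain ⟨j, hj, hj0, hds⟩ := unit_of_sum_sq_eq_one h
        have hij : i = j := by
          by_contra hij
          rw [hj0 i hij] at hdi
          rw [← hdi] at hci
          norm_num at hci
        subst hij
        have e4 : ∑ i, a i * d i = d i * a i := by
          rw [← hds]; exact Finset.sum_congr rfl fun i _ => mul_comm _ _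
        rw [e4, hai', hdi] at h3
        have : p = q := by
          linear_combination b i * c i * h3 - (p - q) * b i ^ 2 * hci - (p - q) * hbi
        omega
      have hD0 : ∑ i, d i ^ 2 ≠ 0 := by
        intro h
        have := congrFun (eq_zero_of_sum_sq_eq_zero h) i
        rw [hdi] at this
        simp only [Pi.zero_apply] at this
        rw [this] at hci
        norm_num at hci
      have htD : t * 2 ≤ t * ∑ i, d i ^ 2 := mul_le_mul_of_nonneg_left (by omega) (by omega)
      have hbound : q ^ 2 + s + 2 * t ≤ 32 + 3 * m := by linarith
      have hp' : p ≤ q - 1 := by omega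
      subst em es et hk
      nlinarith
    · have hA0 : ∑ i, a i ^ 2 = 0 → ∑ i, d i ^ 2 = 0 → False := by
        intro hA0 hD0
        rw [eq_zero_of_sum_sq_eq_zero hA0, eq_zero_of_sum_sq_eq_zero hD0] at h1
        simp at h1
      generalize ∑ i, a i ^ 2 = A at *
      generalize ∑ i, b i ^ 2 = B at *
      generalize ∑ i, c i ^ 2 = C at *
      generalize ∑ i, d i ^ 2 = D at *
      have htD : 30 * D ≤ t * D := mul_le_mul_of_nonneg_right ht30 hD
      rcases (show 5 ≤ B ∧ 1 ≤ C ∨ 5 ≤ C ∨ (2 ≤ B ∧ 2 ≤ C) by omega) with ⟨h, h'⟩ | h | ⟨h, h'⟩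
      · nlinarith
      · nlinarith
      · have : A + 30 * D ≤ 0 := by nlinarith
        exact hA0 (by omega) (by omega)

/-! ### The quadratic system in the exceptional fields -/

/-- A vector of norm `2` has two entries `±1` and two entries `0`; the indices are listed as
`i, j, k, l`. -/
lemma two_units_of_sum_sq_eq_two {b : Fin 4 → ℤ} (h : ∑ i, b i ^ 2 = 2) :
    ∃ i j k l : Fin 4, (∀ f : Fin 4 → ℤ, ∑ n, f n = f i + f j + f k + f l) ∧
      (b i = 1 ∨ b i = -1) ∧ (b j = 1 ∨ b j = -1) ∧ b k = 0 ∧ b l = 0 := by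
  have hb : ∀ i, (b i = 0 ∧ b i ^ 2 = 0) ∨ ((b i = 1 ∨ b i = -1) ∧ b i ^ 2 = 1) := by
    intro i
    have := sq_le_sum_sq b i
    have h1 : b i < 2 := by nlinarith
    have h2 : -2 < b i := by nlinarith
    have h3 : b i = 0 ∨ b i = 1 ∨ b i = -1 := by omega
    rcases h3 with h | h | h <;> simp [h]
  rw [Fin.sum_univ_four] at h
  have hf (f : Fin 4 → ℤ) := Fin.sum_univ_four f
  rcases hb 0 with h0 | h0 <;> rcases hb 1 with h1 | h1 <;> rcases hb 2 with h2 | h2 <;>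
    rcases hb 3 with h3 | h3 <;>
    first
    | exact ⟨0, 1, 2, 3, fun f => by rw [hf], h0.1, h1.1, h2.1, h3.1⟩
    | exact ⟨0, 2, 1, 3, fun f => by rw [hf]; ring, h0.1, h2.1, h1.1, h3.1⟩
    | exact ⟨0, 3, 1, 2, fun f => by rw [hf]; ring, h0.1, h3.1, h1.1, h2.1⟩
    | exact ⟨1, 2, 0, 3, fun f => by rw [hf]; ring, h1.1, h2.1, h0.1, h3.1⟩
    | exact ⟨1, 3, 0, 2, fun f => by rw [hf]; ring, h1.1, h3.1, h0.1, h2.1⟩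
    | exact ⟨2, 3, 0, 1, fun f => by rw [hf]; ring, h2.1, h3.1, h0.1, h1.1⟩
    | linarith [h0.2, h1.2, h2.2, h3.2]

lemma sq_add_sq_ne_twelve (x y : ℤ) : x ^ 2 + y ^ 2 ≠ 12 := by
  have key : ∀ x y : ZMod 16, x ^ 2 + y ^ 2 ≠ 12 := by decide
  intro h
  apply key x y
  exact_mod_cast congrArg (Int.cast : ℤ → ZMod 16) h

/-- The exceptional fields with `s = 13`: the element `12 + 2√13` is not a sum of four squares. -/
lemma no_rep_thirteen {m t q : ℤ} (hm : 10 ≤ m) (ht : 49 ≤ t)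
    {a b c d : Fin 4 → ℤ} (hac : ∀ i, a i % 2 = c i % 2) (hbd : ∀ i, b i % 2 = d i % 2)
    (h0 : ∑ i, a i ^ 2 + m * ∑ i, b i ^ 2 + 13 * ∑ i, c i ^ 2 + t * ∑ i, d i ^ 2 = 48)
    (h2 : ∑ i, a i * c i + q * ∑ i, b i * d i = 4) : False := by
  have hA := sum_sq_nonneg a
  have hB := sum_sq_nonneg b
  have hC := sum_sq_nonneg c
  have hD := sum_sq_nonneg d
  have h4 := sum_sq_congr hac
  have h4' := sum_sq_congr hbd
  have hmB : 10 * ∑ i, b i ^ 2 ≤ m * ∑ i, b i ^ 2 := mul_le_mul_of_nonneg_right hm hB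
  have htD : 49 * ∑ i, d i ^ 2 ≤ t * ∑ i, d i ^ 2 := mul_le_mul_of_nonneg_right ht hD
  have hD0 : ∑ i, d i ^ 2 = 0 := by omega
  rw [hD0] at h0 h4'
  have hd0 := eq_zero_of_sum_sq_eq_zero hD0
  subst hd0
  simp only [Pi.zero_apply, mul_zero, Finset.sum_const_zero, add_zero] at h0 h2
  have hC0 : ∑ i, c i ^ 2 ≠ 0 := fun h => by
    rw [eq_zero_of_sum_sq_eq_zero h] at h2
    simp at h2
  have hB0 : ∑ i, b i ^ 2 = 0 := by omega
  rw [hB0] at h0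
  have hC2 : ∑ i, c i ^ 2 = 2 := by omega
  obtain ⟨i, j, k, l, hs, hi, hj, hk, hl⟩ := two_units_of_sum_sq_eq_two hC2
  rw [hC2, hs] at h0
  rw [hs, hk, hl] at h2
  obtain ⟨x, hx⟩ : ∃ x, x = a i * c i := ⟨_, rfl⟩
  obtain ⟨y, hy⟩ : ∃ y, y = a j * c j := ⟨_, rfl⟩
  have hx2 : x ^ 2 = a i ^ 2 := by rw [hx, mul_pow, isUnit_sq hi, mul_one]
  have hy2 : y ^ 2 = a j ^ 2 := by rw [hy, mul_pow, isUnit_sq hj, mul_one]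
  have hxo : x % 2 = 1 := by
    have := hac i
    rcases hi with hi | hi <;> rw [hi] at hx this <;> omega
  rw [← hx, ← hy] at h2
  rw [← hx2, ← hy2] at h0
  have hyx : y = 4 - x := by linarith
  subst hyx
  have hk2 := sq_nonneg (a k)
  have hl2 := sq_nonneg (a l)
  have hx0 : 0 ≤ x := by nlinarith
  have hx4 : x ≤ 4 := by nlinarith
  have hx13 : x = 1 ∨ x = 3 := by omega
  apply sq_add_sq_ne_twelve (a k) (a l)
  rcases hx13 with rfl | rfl <;> linarith

/-- The exceptional field with `(m, s, t) = (30, 35, 42)`: the element `7 + (1 + √42)²` is not a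
sum of four squares. -/
lemma no_rep_forty_two {a b c d : Fin 4 → ℤ} (ha : ∀ i, a i % 2 = 0)
    (hc : ∀ i, c i % 2 = 0) (hbd : ∀ i, b i % 2 = d i % 2)
    (h0 : ∑ i, a i ^ 2 + 30 * ∑ i, b i ^ 2 + 35 * ∑ i, c i ^ 2 + 42 * ∑ i, d i ^ 2 = 200)
    (h1 : ∑ i, a i * b i + 7 * ∑ i, c i * d i = 0)
    (h2 : ∑ i, a i * c i + 6 * ∑ i, b i * d i = 0)
    (h3 : ∑ i, a i * d i + 5 * ∑ i, b i * c i = 4) : False := by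
  have hA := sum_sq_nonneg a
  have hB := sum_sq_nonneg b
  have hC := sum_sq_nonneg c
  have hD := sum_sq_nonneg d
  have hC4 := sum_sq_dvd_of_even hc
  have h4 := sum_sq_congr hbd
  have hC0 : ∑ i, c i ^ 2 = 0 := by
    by_contra hC0
    have hB0 : ∑ i, b i ^ 2 = 0 := by omega
    have hD0 : ∑ i, d i ^ 2 = 0 := by omega
    rw [eq_zero_of_sum_sq_eq_zero hB0, eq_zero_of_sum_sq_eq_zero hD0] at h3
    simp at h3
  have hc0 := eq_zero_of_sum_sq_eq_zero hC0
  subst hc0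
  simp only [Pi.zero_apply, zero_mul, mul_zero, Finset.sum_const_zero, add_zero, zero_add,
    ne_eq, OfNat.ofNat_ne_zero, not_false_eq_true, zero_pow, mul_eq_zero, false_or] at h0 h1 h2 h3
  have hD0 : ∑ i, d i ^ 2 ≠ 0 := fun h => by
    rw [eq_zero_of_sum_sq_eq_zero h] at h3
    simp at h3
  by_cases hB0 : ∑ i, b i ^ 2 = 0
  · have hb0 := eq_zero_of_sum_sq_eq_zero hB0
    subst hb0
    exact no_rep_quadratic (m := 42) (by norm_num) ha (fun i => by simpa using (hbd i).symm)
      (by rw [hB0] at h0; linarith) h3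
  have hB1 : ∑ i, b i ^ 2 ≠ 1 := fun h => by
    obtain ⟨i, hi, -, hs⟩ := unit_of_sum_sq_eq_one h
    rw [hs] at h2
    have := hbd i
    rcases hi with hi | hi <;> rw [hi] at h2 this <;> omega
  have hD1 : ∑ i, d i ^ 2 ≠ 1 := fun h => by
    obtain ⟨i, hi, -, hs⟩ := unit_of_sum_sq_eq_one h
    have h2' : ∑ i, d i * b i = 0 := by rw [← h2]; exact Finset.sum_congr rfl fun i _ => mul_comm _ _
    rw [hs] at h2'
    have := hbd i
    rcases hi with hi | hi <;> rw [hi] at h2' this <;> omega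
  have hD2 : ∑ i, d i ^ 2 = 2 := by omega
  have hB2 : ∑ i, b i ^ 2 = 2 := by omega
  obtain ⟨a, rfl⟩ := exists_half ha
  rw [sum_sq_half] at h0
  beta_reduce at h1 h3
  obtain ⟨i, j, k, l, hs, hi, hj, hk, hl⟩ := two_units_of_sum_sq_eq_two hD2
  have hbk : b k = 0 := by
    have := sq_le_sum_sq b k
    have h1 : b k < 2 := by nlinarith
    have h2 : -2 < b k := by nlinarith
    have := hbd k
    omega
  have hbl : b l = 0 := by
    have := sq_le_sum_sq b l
    have h1 : b l < 2 := by nlinarith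
    have h2 : -2 < b l := by nlinarith
    have := hbd l
    omega
  have hbu : ∀ n, b n % 2 = 1 → b n = 1 ∨ b n = -1 := by
    intro n hn
    have := sq_le_sum_sq b n
    have h1 : b n < 2 := by nlinarith
    have h2 : -2 < b n := by nlinarith
    omega
  have hbi := hbu i (by have := hbd i; rcases hi with hi | hi <;> rw [hi] at this <;> omega)
  have hbj := hbu j (by have := hbd j; rcases hj with hj | hj <;> rw [hj] at this <;> omega)
  rw [hs, hk, hl] at h2 h3
  rw [hs, hbk, hbl] at h1
  rw [hD2, hB2, hs] at h0
  apply sq_add_sq_ne_twelve (a k) (a l)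
  have hij : a i ^ 2 = 1 ∧ a j ^ 2 = 1 := by
    have : (a i = 1 ∨ a i = -1) ∧ (a j = 1 ∨ a j = -1) := by
      rcases hi with hi | hi <;> rcases hj with hj | hj <;> rcases hbi with hbi | hbi <;>
        rcases hbj with hbj | hbj <;> rw [hi, hj] at h2 h3 <;> rw [hbi, hbj] at h1 h2 <;> omega
    exact ⟨isUnit_sq this.1, isUnit_sq this.2⟩
  linarith [hij.1, hij.2]

/-! ### Residues and parities -/

/-- The residues modulo `4` of the three radicands, given that none is divisible by `4` and that
`m = pq` is not `1`. -/
lemma residues_mod_four {p q r : ℕ} (hm0 : (p * q) % 4 ≠ 0) (hs0 : (p * r) % 4 ≠ 0)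
    (ht0 : (q * r) % 4 ≠ 0) (hm1 : (p * q) % 4 ≠ 1) :
    ((p * r) % 4 = 1 ∧ p % 2 = 1 ∧ r % 2 = 1 ∧ r % 4 = p % 4 ∧ (q * r) % 4 = (p * q) % 4) ∨
    ((q * r) % 4 = 1 ∧ r % 2 = 1 ∧ r % 4 = q % 4 ∧ (p * r) % 4 = (p * q) % 4) ∨
    ((p * q) % 4 = 3 ∧ (p * r) % 4 = 2 ∧ (q * r) % 4 = 2 ∧ r % 2 = 0) ∨
    ((p * q) % 4 = 2 ∧ (p * r) % 4 = 3 ∧ (q * r) % 4 = 2 ∧ q % 2 = 0) ∨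
    ((p * q) % 4 = 2 ∧ (p * r) % 4 = 2 ∧ (q * r) % 4 = 3) := by
  have hp : p % 2 = p % 4 % 2 := by omega
  have hq : q % 2 = q % 4 % 2 := by omega
  have hr : r % 2 = r % 4 % 2 := by omega
  rw [hp, hq, hr]
  rw [Nat.mul_mod p q] at hm0 hm1
  rw [Nat.mul_mod p r] at hs0
  rw [Nat.mul_mod q r] at ht0
  rw [Nat.mul_mod p q, Nat.mul_mod p r, Nat.mul_mod q r]
  have hp4 := Nat.mod_lt p (show 4 > 0 by norm_num)
  have hq4 := Nat.mod_lt q (show 4 > 0 by norm_num)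
  have hr4 := Nat.mod_lt r (show 4 > 0 by norm_num)
  generalize p % 4 = p at *
  generalize q % 4 = q at *
  generalize r % 4 = r at *
  clear hp hq hr
  interval_cases p <;> interval_cases q <;> interval_cases r <;>
    first
    | exact absurd rfl hm0
    | exact absurd rfl hs0
    | exact absurd rfl ht0
    | exact absurd rfl hm1
    | simp

lemma norm_mod_two {m s t a b c d : ℤ} (h : 4 ∣ a ^ 2 + m * b ^ 2 - s * c ^ 2 - t * d ^ 2) :
    4 ∣ a % 2 + m * (b % 2) - s * (c % 2) - t * (d % 2) := by
  have key : ∀ x : ℤ, ∃ e, x ^ 2 = 4 * e + x % 2 := by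
    intro x
    obtain ⟨k, rfl | rfl⟩ := Int.even_or_odd' x
    · exact ⟨k ^ 2, by rw [show (2 * k) % 2 = 0 by omega]; ring⟩
    · exact ⟨k ^ 2 + k, by rw [show (2 * k + 1) % 2 = 1 by omega]; ring⟩
  obtain ⟨e₁, h₁⟩ := key a
  obtain ⟨e₂, h₂⟩ := key b
  obtain ⟨e₃, h₃⟩ := key c
  obtain ⟨e₄, h₄⟩ := key d
  obtain ⟨k, hk⟩ := h
  rw [h₁, h₂, h₃, h₄] at hk
  exact ⟨k - e₁ - m * e₂ + s * e₃ + t * e₄, by linear_combination hk⟩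

lemma prod_mod_two {r a b c d : ℤ} (h : 2 ∣ a * b - r * c * d) :
    2 ∣ (a % 2) * (b % 2) - r * (c % 2) * (d % 2) := by
  obtain ⟨k, hk⟩ := h
  have ha := Int.emod_add_mul_ediv a 2
  have hb := Int.emod_add_mul_ediv b 2
  have hc := Int.emod_add_mul_ediv c 2
  have hd := Int.emod_add_mul_ediv d 2
  generalize a % 2 = α at *
  generalize b % 2 = β at *
  generalize c % 2 = γ at *
  generalize d % 2 = δ at *
  generalize a / 2 = a' at *
  generalize b / 2 = b' at *
  generalize c / 2 = c' at *
  generalize d / 2 = d' at *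
  subst ha hb hc hd
  exact ⟨k - a' * β - α * b' - 2 * a' * b' + r * (c' * δ + γ * d' + 2 * c' * d'),
    by linear_combination hk⟩

lemma parity_s_one {m s t r a b c d : ℤ} (hm : m % 4 = 2 ∨ m % 4 = 3) (hs : s % 4 = 1)
    (ht : t % 4 = m % 4) (hr : r % 2 = 1)
    (h : 4 ∣ a ^ 2 + m * b ^ 2 - s * c ^ 2 - t * d ^ 2) (h' : 2 ∣ a * b - r * c * d) :
    a % 2 = c % 2 ∧ b % 2 = d % 2 := by
  replace h := norm_mod_two h
  replace h' := prod_mod_two h'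
  rcases Int.emod_two_eq a with ha | ha <;> rcases Int.emod_two_eq b with hb | hb <;>
    rcases Int.emod_two_eq c with hc | hc <;> rcases Int.emod_two_eq d with hd | hd <;>
    rw [ha, hb, hc, hd] at h h' <;> omega

lemma parity_t_one {m s t r a b c d : ℤ} (hm : m % 4 = 2 ∨ m % 4 = 3) (ht : t % 4 = 1)
    (hs : s % 4 = m % 4) (hr : r % 2 = 1)
    (h : 4 ∣ a ^ 2 + m * b ^ 2 - s * c ^ 2 - t * d ^ 2) (h' : 2 ∣ a * b - r * c * d) :
    a % 2 = d % 2 ∧ b % 2 = c % 2 := by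
  replace h := norm_mod_two h
  replace h' := prod_mod_two h'
  rcases Int.emod_two_eq a with ha | ha <;> rcases Int.emod_two_eq b with hb | hb <;>
    rcases Int.emod_two_eq c with hc | hc <;> rcases Int.emod_two_eq d with hd | hd <;>
    rw [ha, hb, hc, hd] at h h' <;> omega

lemma parity_m_odd {m s t r a b c d : ℤ} (hm : m % 4 = 3) (hs : s % 4 = 2)
    (ht : t % 4 = 2) (hr : r % 2 = 0)
    (h : 4 ∣ a ^ 2 + m * b ^ 2 - s * c ^ 2 - t * d ^ 2) (h' : 2 ∣ a * b - r * c * d) :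
    a % 2 = 0 ∧ b % 2 = 0 ∧ c % 2 = d % 2 := by
  replace h := norm_mod_two h
  replace h' := prod_mod_two h'
  rcases Int.emod_two_eq a with ha | ha <;> rcases Int.emod_two_eq b with hb | hb <;>
    rcases Int.emod_two_eq c with hc | hc <;> rcases Int.emod_two_eq d with hd | hd <;>
    rw [ha, hb, hc, hd] at h h' <;> omega

lemma parity_s_three {m s t a b c d : ℤ} (hm : m % 4 = 2) (hs : s % 4 = 3) (ht : t % 4 = 2)
    (h : 4 ∣ a ^ 2 + m * b ^ 2 - s * c ^ 2 - t * d ^ 2)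
    (h' : 4 ∣ a ^ 2 + s * c ^ 2 - m * b ^ 2 - t * d ^ 2) :
    a % 2 = 0 ∧ c % 2 = 0 ∧ b % 2 = d % 2 := by
  replace h := norm_mod_two h
  replace h' := norm_mod_two h'
  rcases Int.emod_two_eq a with ha | ha <;> rcases Int.emod_two_eq b with hb | hb <;>
    rcases Int.emod_two_eq c with hc | hc <;> rcases Int.emod_two_eq d with hd | hd <;>
    rw [ha, hb, hc, hd] at h h' <;> omega

lemma parity_t_three {m s t a b c d : ℤ} (hm : m % 4 = 2) (hs : s % 4 = 2) (ht : t % 4 = 3)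
    (h : 4 ∣ a ^ 2 + m * b ^ 2 - s * c ^ 2 - t * d ^ 2)
    (h' : 4 ∣ a ^ 2 + t * d ^ 2 - m * b ^ 2 - s * c ^ 2) :
    a % 2 = 0 ∧ d % 2 = 0 ∧ b % 2 = c % 2 := by
  replace h := norm_mod_two h
  replace h' := norm_mod_two h'
  rcases Int.emod_two_eq a with ha | ha <;> rcases Int.emod_two_eq b with hb | hb <;>
    rcases Int.emod_two_eq c with hc | hc <;> rcases Int.emod_two_eq d with hd | hd <;>
    rw [ha, hb, hc, hd] at h h' <;> omega

/-! ### From sums of four squares to the quadratic system -/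

lemma sqrt_products (t₀ s₀ m₀ : ℕ) :
    √((t₀ * s₀ : ℕ) : ℝ) * √((t₀ * m₀ : ℕ) : ℝ) = t₀ * √((s₀ * m₀ : ℕ) : ℝ) ∧
    √((t₀ * s₀ : ℕ) : ℝ) * √((s₀ * m₀ : ℕ) : ℝ) = s₀ * √((t₀ * m₀ : ℕ) : ℝ) ∧
    √((t₀ * m₀ : ℕ) : ℝ) * √((s₀ * m₀ : ℕ) : ℝ) = m₀ * √((t₀ * s₀ : ℕ) : ℝ) := by
  push_cast
  rw [Real.sqrt_mul (Nat.cast_nonneg t₀), Real.sqrt_mul (Nat.cast_nonneg t₀),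
    Real.sqrt_mul (Nat.cast_nonneg s₀)]
  have h₁ := Real.mul_self_sqrt (Nat.cast_nonneg (α := ℝ) t₀)
  have h₂ := Real.mul_self_sqrt (Nat.cast_nonneg (α := ℝ) s₀)
  have h₃ := Real.mul_self_sqrt (Nat.cast_nonneg (α := ℝ) m₀)
  refine ⟨?_, ?_, ?_⟩
  · linear_combination (√(s₀ : ℝ) * √(m₀ : ℝ)) * h₁
  · linear_combination (√(t₀ : ℝ) * √(m₀ : ℝ)) * h₂
  · linear_combination (√(t₀ : ℝ) * √(s₀ : ℝ)) * h₃

/-- The numbers `1, √m, √s, √t` are linearly independent over `ℚ`. -/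
lemma sqrt_independent {t₀ s₀ m₀ : ℕ} (ht₀ : 0 < t₀) (hts : t₀ < s₀) (hsm : s₀ < m₀)
    (hm : Squarefree (t₀ * s₀)) (hs : Squarefree (t₀ * m₀)) (a b c d : ℚ)
    (h : (a : ℝ) + b * √((t₀ * s₀ : ℕ) : ℝ) + c * √((t₀ * m₀ : ℕ) : ℝ)
      + d * √((s₀ * m₀ : ℕ) : ℝ) = 0) : a = 0 ∧ b = 0 ∧ c = 0 ∧ d = 0 := by
  obtain ⟨hxy, -, -⟩ := sqrt_products t₀ s₀ m₀
  have ht₀' : (t₀ : ℝ) ≠ 0 := by exact_mod_cast ht₀.ne'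
  have hne : t₀ * s₀ ≠ t₀ * m₀ := fun h => hsm.ne (Nat.eq_of_mul_eq_mul_left ht₀ h)
  have key := coeffs_zero_of_biquadratic (p := (t₀ * s₀ : ℕ)) (q := (t₀ * m₀ : ℕ))
    (x := √((t₀ * s₀ : ℕ) : ℝ)) (y := √((t₀ * m₀ : ℕ) : ℝ))
    (by rw [Real.sq_sqrt (Nat.cast_nonneg _)]; norm_cast)
    (by rw [Real.sq_sqrt (Nat.cast_nonneg _)]; norm_cast)
    (natCast_ne_sq_of_squarefree hm (by nlinarith)) (natCast_ne_sq_of_squarefree hs (by nlinarith))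
    (natCast_mul_ne_sq_of_squarefree hm hs hne) (a := a) (b := b) (c := c) (d := d / t₀)
    (by
      rw [hxy, ← h]
      push_cast
      field_simp)
  refine ⟨key.1, key.2.1, key.2.2.1, ?_⟩
  have : (t₀ : ℚ) ≠ 0 := by exact_mod_cast ht₀.ne'
  simpa [this] using key.2.2.2

/-- The three radicands of `K` are the pairwise products `t₀s₀ < t₀m₀ < s₀m₀` of three integers
(their pairwise greatest common divisors), and `1, √m, √s, √t` span `K`. -/
lemma exists_factors_and_coords {K : IntermediateField ℚ ℝ} (hK : IsBiquadratic K)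
    {m s t : ℕ} (hm : Squarefree m) (hs : Squarefree s) (ht : Squarefree t)
    (h1m : 1 < m) (hms : m < s) (hst : s < t)
    (hmK : √(m : ℝ) ∈ K) (hsK : √(s : ℝ) ∈ K) (htK : √(t : ℝ) ∈ K) :
    ∃ t₀ s₀ m₀ : ℕ, 0 < t₀ ∧ t₀ < s₀ ∧ s₀ < m₀ ∧ m = t₀ * s₀ ∧ s = t₀ * m₀ ∧ t = s₀ * m₀ ∧
      ∀ u ∈ K, ∃ a b c d : ℚ, u = a + b * √(m : ℝ) + c * √(s : ℝ) + d * √(t : ℝ) := by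
  obtain ⟨p, q, hp, hq, h1p, h1q, hpq, rfl⟩ := hK
  obtain ⟨hr, hcp, hcq⟩ :=
    classes_of_three_roots hp hq h1p h1q hpq hm hs ht h1m hms hst hmK hsK htK
  obtain ⟨t₀, s₀, m₀, h0, h1, h2, rfl, rfl, rfl⟩ := exists_gcd_factors hm hs ht hms hst hr
  refine ⟨t₀, s₀, m₀, h0, h1, h2, rfl, rfl, rfl, fun u hu => ?_⟩
  obtain ⟨hxy, hxz, hyz⟩ := sqrt_products t₀ s₀ m₀
  have sqrt_int : ∀ n : ℕ, IsIntegral ℚ √(n : ℝ) := fun n =>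
    IsIntegral.of_pow (n := 2) (by norm_num) (by
      rw [Real.sq_sqrt (Nat.cast_nonneg _)]
      exact_mod_cast isIntegral_algebraMap (R := ℚ) (A := ℝ) (x := (n : ℚ)))
  have hform : ∀ n : ℕ, (∃ r : ℚ, √(n : ℝ) = r * √((t₀ * s₀ : ℕ) : ℝ) ∨
      √(n : ℝ) = r * √((t₀ * m₀ : ℕ) : ℝ) ∨ √(n : ℝ) = r * √((s₀ * m₀ : ℕ) : ℝ)) →
      ∃ a b c d : ℚ, √(n : ℝ) = a + b * √((t₀ * s₀ : ℕ) : ℝ) + c * √((t₀ * m₀ : ℕ) : ℝ)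
        + d * √((s₀ * m₀ : ℕ) : ℝ) := by
    rintro n ⟨r, h | h | h⟩
    · exact ⟨0, r, 0, 0, by rw [h]; push_cast; ring⟩
    · exact ⟨0, 0, r, 0, by rw [h]; push_cast; ring⟩
    · exact ⟨0, 0, 0, r, by rw [h]; push_cast; ring⟩
  refine exists_coeffs_of_mem_adjoin (p := (t₀ * s₀ : ℕ)) (q := (t₀ * m₀ : ℕ))
    (n := t₀) (k := s₀) (l := m₀)
    (by rw [Real.sq_sqrt (Nat.cast_nonneg _)]; norm_cast)
    (by rw [Real.sq_sqrt (Nat.cast_nonneg _)]; norm_cast)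
    (by exact_mod_cast hxy) (by exact_mod_cast hxz) (by exact_mod_cast hyz)
    (by exact_mod_cast h0.ne') {√(p : ℝ), √(q : ℝ)} ?_ hu
  rintro v (rfl | rfl)
  · exact ⟨sqrt_int p, hform p hcp⟩
  · exact ⟨sqrt_int q, hform q hcq⟩

/-- Comparison of coordinates: a sum of four squares of integers of `K`, with all coordinates
doubled, gives a solution in integers of the quadratic system studied above, subject to the
congruences satisfied by integers of `K`. -/
lemma four_squares_system {K : IntermediateField ℚ ℝ} {t₀ s₀ m₀ : ℕ}
    (ht₀ : 0 < t₀) (hts : t₀ < s₀) (hsm : s₀ < m₀)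
    (hm : Squarefree (t₀ * s₀)) (hs : Squarefree (t₀ * m₀)) (ht : Squarefree (s₀ * m₀))
    (hm4 : (t₀ * s₀) % 4 ≠ 1)
    (hcoord : ∀ u ∈ K, ∃ a b c d : ℚ, u = a + b * √((t₀ * s₀ : ℕ) : ℝ)
      + c * √((t₀ * m₀ : ℕ) : ℝ) + d * √((s₀ * m₀ : ℕ) : ℝ))
    (e₀ e₁ e₂ e₃ : ℤ) {α : ℝ} (hα : α = e₀ + e₁ * √((t₀ * s₀ : ℕ) : ℝ)
      + e₂ * √((t₀ * m₀ : ℕ) : ℝ) + e₃ * √((s₀ * m₀ : ℕ) : ℝ))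
    (h : SumOfNSquaresIn (ringOfInt K) 4 α) :
    ∃ a b c d : Fin 4 → ℤ,
      (∀ i, 4 ∣ a i ^ 2 + t₀ * s₀ * b i ^ 2 - t₀ * m₀ * c i ^ 2 - s₀ * m₀ * d i ^ 2) ∧
      (∀ i, 2 ∣ a i * b i - m₀ * c i * d i) ∧
      ((t₀ * m₀) % 4 ≠ 1 →
        ∀ i, 4 ∣ a i ^ 2 + t₀ * m₀ * c i ^ 2 - t₀ * s₀ * b i ^ 2 - s₀ * m₀ * d i ^ 2) ∧
      ((s₀ * m₀) % 4 ≠ 1 →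
        ∀ i, 4 ∣ a i ^ 2 + s₀ * m₀ * d i ^ 2 - t₀ * s₀ * b i ^ 2 - t₀ * m₀ * c i ^ 2) ∧
      ∑ i, a i ^ 2 + (t₀ * s₀ : ℤ) * ∑ i, b i ^ 2 + (t₀ * m₀ : ℤ) * ∑ i, c i ^ 2
        + (s₀ * m₀ : ℤ) * ∑ i, d i ^ 2 = 4 * e₀ ∧
      ∑ i, a i * b i + (m₀ : ℤ) * ∑ i, c i * d i = 2 * e₁ ∧
      ∑ i, a i * c i + (s₀ : ℤ) * ∑ i, b i * d i = 2 * e₂ ∧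
      ∑ i, a i * d i + (t₀ : ℤ) * ∑ i, b i * c i = 2 * e₃ := by
  obtain ⟨u, hu, hsum⟩ := h
  have hind := sqrt_independent ht₀ hts hsm hm hs
  obtain ⟨hxy, hxz, hyz⟩ := sqrt_products t₀ s₀ m₀
  have hx := Real.sq_sqrt (Nat.cast_nonneg (α := ℝ) (t₀ * s₀))
  have hy := Real.sq_sqrt (Nat.cast_nonneg (α := ℝ) (t₀ * m₀))
  have hz := Real.sq_sqrt (Nat.cast_nonneg (α := ℝ) (s₀ * m₀))
  generalize √((t₀ * s₀ : ℕ) : ℝ) = x at *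
  generalize √((t₀ * m₀ : ℕ) : ℝ) = y at *
  generalize √((s₀ * m₀ : ℕ) : ℝ) = z at *
  have hcoords : ∀ i, ∃ a b c d : ℤ, 2 * u i = a + b * x + c * y + d * z ∧
      4 ∣ a ^ 2 + t₀ * s₀ * b ^ 2 - t₀ * m₀ * c ^ 2 - s₀ * m₀ * d ^ 2 ∧
      2 ∣ a * b - m₀ * c * d ∧
      ((t₀ * m₀) % 4 ≠ 1 →
        4 ∣ a ^ 2 + t₀ * m₀ * c ^ 2 - t₀ * s₀ * b ^ 2 - s₀ * m₀ * d ^ 2) ∧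
      ((s₀ * m₀) % 4 ≠ 1 →
        4 ∣ a ^ 2 + s₀ * m₀ * d ^ 2 - t₀ * s₀ * b ^ 2 - t₀ * m₀ * c ^ 2) := by
    intro i
    obtain ⟨huK, hui⟩ := hu i
    obtain ⟨a, b, c, d, hu'⟩ := hcoord _ huK
    rw [hu'] at hui
    obtain ⟨a', b', c', d', ha, hb, hc, hd, hrest⟩ :=
      integer_coordinates hx hy hz hxy hxz hyz hind hm hs ht hm4 hui
    refine ⟨a', b', c', d', ?_, hrest⟩
    have ha : 2 * (a : ℝ) = a' := by exact_mod_cast congrArg (Rat.cast : ℚ → ℝ) ha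
    have hb : 2 * (b : ℝ) = b' := by exact_mod_cast congrArg (Rat.cast : ℚ → ℝ) hb
    have hc : 2 * (c : ℝ) = c' := by exact_mod_cast congrArg (Rat.cast : ℚ → ℝ) hc
    have hd : 2 * (d : ℝ) = d' := by exact_mod_cast congrArg (Rat.cast : ℚ → ℝ) hd
    rw [hu', ← ha, ← hb, ← hc, ← hd]
    ring
  choose a b c d hu2 h4 h2 h4s h4t using hcoords
  refine ⟨a, b, c, d, h4, h2, fun h i => h4s i h, fun h i => h4t i h, ?_⟩
  have key : ∀ i, 4 * u i ^ 2 =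
      ((a i ^ 2 + (t₀ * s₀ : ℤ) * b i ^ 2 + (t₀ * m₀ : ℤ) * c i ^ 2 + (s₀ * m₀ : ℤ) * d i ^ 2 : ℤ)
        : ℝ) + ((2 * (a i * b i + m₀ * (c i * d i)) : ℤ) : ℝ) * x
        + ((2 * (a i * c i + s₀ * (b i * d i)) : ℤ) : ℝ) * y
        + ((2 * (a i * d i + t₀ * (b i * c i)) : ℤ) : ℝ) * z := by
    intro i
    have : 4 * u i ^ 2 = (2 * u i) ^ 2 := by ring
    rw [this, hu2 i]
    push_cast at hx hy hz ⊢
    linear_combination (b i : ℝ) ^ 2 * hx + (c i : ℝ) ^ 2 * hy + (d i : ℝ) ^ 2 * hz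
      + 2 * b i * c i * hxy + 2 * b i * d i * hxz + 2 * c i * d i * hyz
  have htot : 4 * α = ∑ i, 4 * u i ^ 2 := by rw [hsum, Finset.mul_sum]
  rw [Finset.sum_congr rfl fun i _ => key i, Finset.sum_add_distrib, Finset.sum_add_distrib,
    Finset.sum_add_distrib, ← Finset.sum_mul, ← Finset.sum_mul, ← Finset.sum_mul,
    ← Int.cast_sum, ← Int.cast_sum, ← Int.cast_sum, ← Int.cast_sum, hα] at htot
  simp only [← Finset.mul_sum, Finset.sum_add_distrib] at htot
  generalize ∑ i, a i ^ 2 + (t₀ * s₀ : ℤ) * ∑ i, b i ^ 2 + (t₀ * m₀ : ℤ) * ∑ i, c i ^ 2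
        + (s₀ * m₀ : ℤ) * ∑ i, d i ^ 2 = E₀ at *
  generalize ∑ i, a i * b i + (m₀ : ℤ) * ∑ i, c i * d i = E₁ at *
  generalize ∑ i, a i * c i + (s₀ : ℤ) * ∑ i, b i * d i = E₂ at *
  generalize ∑ i, a i * d i + (t₀ : ℤ) * ∑ i, b i * c i = E₃ at *
  obtain ⟨r₀, r₁, r₂, r₃⟩ := hind (E₀ - 4 * e₀ : ℤ) (2 * E₁ - 4 * e₁ : ℤ) (2 * E₂ - 4 * e₂ : ℤ)
    (2 * E₃ - 4 * e₃ : ℤ) (by push_cast at htot ⊢; linarith)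
  have r₀ : E₀ - 4 * e₀ = 0 := by exact_mod_cast r₀
  have r₁ : 2 * E₁ - 4 * e₁ = 0 := by exact_mod_cast r₁
  have r₂ : 2 * E₂ - 4 * e₂ = 0 := by exact_mod_cast r₂
  have r₃ : 2 * E₃ - 4 * e₃ = 0 := by exact_mod_cast r₃
  omega

/-! ### Elements that are not sums of four squares -/

set_option maxHeartbeats 2000000 in
/-- Outside the exceptional fields, `α₀ = 7 + (1 + √m)² = (8 + m) + 2√m` is not a sum of four
squares. -/
lemma alpha_not_sum_of_four {K : IntermediateField ℚ ℝ} {t₀ s₀ m₀ : ℕ}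
    (ht₀ : 0 < t₀) (hts : t₀ < s₀) (hsm : s₀ < m₀)
    (hm : Squarefree (t₀ * s₀)) (hs : Squarefree (t₀ * m₀)) (ht : Squarefree (s₀ * m₀))
    (hm4 : (t₀ * s₀) % 4 ≠ 1) (hm10 : 10 ≤ t₀ * s₀)
    (hs4 : t₀ * m₀ ≠ t₀ * s₀ + 4) (hs8 : t₀ * m₀ ≠ t₀ * s₀ + 8) (hs12 : t₀ * m₀ ≠ t₀ * s₀ + 12)
    (hcoord : ∀ u ∈ K, ∃ a b c d : ℚ, u = a + b * √((t₀ * s₀ : ℕ) : ℝ)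
      + c * √((t₀ * m₀ : ℕ) : ℝ) + d * √((s₀ * m₀ : ℕ) : ℝ))
    (hex : ¬ (t₀ * m₀ = 13 ∧ (t₀ * s₀ = 10 ∨ t₀ * s₀ = 11)))
    (hex' : ¬ (t₀ * s₀ = 30 ∧ t₀ * m₀ = 35)) :
    ¬ SumOfNSquaresIn (ringOfInt K) 4 (7 + (1 + √((t₀ * s₀ : ℕ) : ℝ)) ^ 2) := by
  intro h
  have hm0 := squarefree_mod_four hm
  have hs0 := squarefree_mod_four hs
  have ht0 := squarefree_mod_four ht
  obtain ⟨a, b, c, d, k4, k2, k4s, k4t, h0, h1, h2, h3⟩ :=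
    four_squares_system ht₀ hts hsm hm hs ht hm4 hcoord (8 + t₀ * s₀) 2 0 0 (by
      have := Real.sq_sqrt (Nat.cast_nonneg (α := ℝ) (t₀ * s₀))
      push_cast at this ⊢
      linear_combination this) h
  have hs₀ : 5 ≤ s₀ := by
    by_contra hlt
    have h4 : s₀ = 4 ∨ s₀ ≤ 3 := by omega
    rcases h4 with rfl | h4
    · omega
    · nlinarith
  have hms : t₀ * s₀ < t₀ * m₀ := Nat.mul_lt_mul_of_pos_left hsm ht₀
  have hst : t₀ * m₀ < s₀ * m₀ := Nat.mul_lt_mul_of_pos_right hts (by omega)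
  have ht30 : 30 ≤ s₀ * m₀ := by nlinarith
  have hres := residues_mod_four hm0 hs0 ht0 hm4
  have em : ((t₀ * s₀ : ℕ) : ℤ) = t₀ * s₀ := by push_cast; ring
  have es : ((t₀ * m₀ : ℕ) : ℤ) = t₀ * m₀ := by push_cast; ring
  have et : ((s₀ * m₀ : ℕ) : ℤ) = s₀ * m₀ := by push_cast; ring
  rw [← em, ← es, ← et] at h0
  simp only [← em, ← es, ← et] at k4 k4s k4t
  generalize t₀ * s₀ = m at *
  generalize t₀ * m₀ = s at *
  generalize s₀ * m₀ = t at *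
  have h0 : ∑ i, a i ^ 2 + (m : ℤ) * ∑ i, b i ^ 2 + (s : ℤ) * ∑ i, c i ^ 2
      + (t : ℤ) * ∑ i, d i ^ 2 = 32 + 4 * m := by linarith
  rcases hres with ⟨es1, ep, er, epr, etm⟩ | ⟨et1, er, eqr, esm⟩ | ⟨em3, es2, et2, er⟩ |
    ⟨em2, es3, et2, eq⟩ | ⟨em2, es2, et3⟩
  · have hpar := fun i => parity_s_one (by omega) (by omega) (by omega) (by omega) (k4 i) (k2 i)
    have := rep_s_one (m := m) (s := s) (t := t) (p := t₀) (q := s₀) (r := m₀) (by omega)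
      (by omega) (by omega) (by omega) (by omega) (by omega) (by omega) (by omega) (by omega)
      (by omega) (by omega) em es et (fun i => (hpar i).1) (fun i => (hpar i).2) h0 h1 h2 h3
    omega
  · have hpar := fun i => parity_t_one (by omega) (by omega) (by omega) (by omega) (k4 i) (k2 i)
    exact no_rep_t_one (m := m) (s := s) (t := t) (p := t₀) (q := s₀) (r := m₀) (by omega)
      (by omega) (by omega) (by omega) (by omega) (by omega) (by omega) (by omega)
      em es et (fun i => (hpar i).1) (fun i => (hpar i).2) h0 h1 h2 h3
  · have hpar := fun i => parity_m_odd (by omega) (by omega) (by omega) (by omega) (k4 i) (k2 i)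
    exact no_rep_m_odd (m := m) (s := s) (t := t) (q := s₀) (r := m₀) (by omega)
      (by omega) (by omega) (by omega) (by omega) (fun i => (hpar i).1) (fun i => (hpar i).2.1)
      (fun i => (hpar i).2.2) h0 h1
  · have hpar := fun i => parity_s_three (by omega) (by omega) (by omega) (k4 i)
      (k4s (by omega) i)
    have := rep_s_three (m := m) (s := s) (t := t) (p := t₀) (q := s₀) (r := m₀) (by omega)
      (by omega) (by omega) (by omega) (by omega) (by omega) (by omega) (by omega) em es et
      (fun i => (hpar i).1) (fun i => (hpar i).2.1) (fun i => (hpar i).2.2) h0 h1 h2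
    omega
  · have hpar := fun i => parity_t_three (by omega) (by omega) (by omega) (k4 i)
      (k4t (by omega) i)
    exact no_rep_t_three (m := m) (s := s) (t := t) (p := t₀) (q := s₀) (r := m₀) (by omega)
      (by omega) (by omega) (by omega) (by omega) (by omega)
      (fun i => (hpar i).1) (fun i => (hpar i).2.1) (fun i => (hpar i).2.2) h0 h1 h3

/-- In the exceptional fields with `s = 13`, the element is `12 + 2√13`. -/
lemma thirteen_not_sum_of_four {K : IntermediateField ℚ ℝ} {t₀ s₀ m₀ : ℕ}
    (ht₀ : 0 < t₀) (hts : t₀ < s₀) (hsm : s₀ < m₀)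
    (hm : Squarefree (t₀ * s₀)) (hs : Squarefree (t₀ * m₀)) (ht : Squarefree (s₀ * m₀))
    (hcoord : ∀ u ∈ K, ∃ a b c d : ℚ, u = a + b * √((t₀ * s₀ : ℕ) : ℝ)
      + c * √((t₀ * m₀ : ℕ) : ℝ) + d * √((s₀ * m₀ : ℕ) : ℝ))
    (hs13 : t₀ * m₀ = 13) (hmm : t₀ * s₀ = 10 ∨ t₀ * s₀ = 11) :
    ¬ SumOfNSquaresIn (ringOfInt K) 4
      (3 + ((1 + √13) / 2) ^ 2 + (1 + (1 + √13) / 2) ^ 2) := by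
  intro h
  have h1 : t₀ = 1 := by
    have : t₀ ∣ 13 := ⟨m₀, hs13.symm⟩
    rcases (Nat.dvd_prime (by norm_num)).1 this with h | h
    · exact h
    · subst h; omega
  subst h1
  have hm₀ : m₀ = 13 := by omega
  subst hm₀
  obtain ⟨a, b, c, d, k4, k2, -, -, h0, -, h2, -⟩ :=
    four_squares_system ht₀ hts hsm hm hs ht (by omega) hcoord 12 0 2 0 (by
      have := Real.sq_sqrt (show (0 : ℝ) ≤ 13 by norm_num)
      push_cast
      rw [one_mul]
      linear_combination this / 2) h
  have hpar := fun i => parity_s_one (by push_cast; omega) (by norm_num) (by push_cast; omega)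
    (by norm_num) (k4 i) (k2 i)
  exact no_rep_thirteen (m := s₀) (t := s₀ * 13) (q := s₀) (by omega) (by omega)
    (fun i => (hpar i).1) (fun i => (hpar i).2) (by push_cast at h0; linarith) (by linarith)

lemma forty_two_not_sum_of_four {K : IntermediateField ℚ ℝ}
    (hcoord : ∀ u ∈ K, ∃ a b c d : ℚ, u = a + b * √((5 * 6 : ℕ) : ℝ)
      + c * √((5 * 7 : ℕ) : ℝ) + d * √((6 * 7 : ℕ) : ℝ))
    (hm : Squarefree (5 * 6)) (hs : Squarefree (5 * 7)) (ht : Squarefree (6 * 7)) :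
    ¬ SumOfNSquaresIn (ringOfInt K) 4 (7 + (1 + √42) ^ 2) := by
  intro h
  obtain ⟨a, b, c, d, k4, -, k4s, -, h0, h1, h2, h3⟩ :=
    four_squares_system (by norm_num) (by norm_num) (by norm_num) hm hs ht (by norm_num)
      hcoord 50 0 0 2 (by
      have := Real.sq_sqrt (show (0 : ℝ) ≤ 42 by norm_num)
      norm_num
      linear_combination this) h
  have hpar := fun i => parity_s_three (by norm_num) (by norm_num) (by norm_num) (k4 i)
    (k4s (by norm_num) i)
  exact no_rep_forty_two (fun i => (hpar i).1) (fun i => (hpar i).2.1) (fun i => (hpar i).2.2)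
    (by push_cast at h0; linarith) (by push_cast at h1; linarith) (by push_cast at h2; linarith)
    (by push_cast at h3; linarith)

/-- If `(m, s) = (30, 35)`, then `t₀ ∣ 5`, and `t₀ = 1` would make `t = 30 · 35` not
square-free. -/
lemma factors_thirty {t₀ s₀ m₀ : ℕ} (hm : t₀ * s₀ = 30) (hs : t₀ * m₀ = 35)
    (ht : Squarefree (s₀ * m₀)) : t₀ = 5 ∧ s₀ = 6 ∧ m₀ = 7 := by
  have h5 : t₀ ∣ 5 := by
    have := Nat.dvd_sub (Dvd.intro _ hs) (Dvd.intro _ hm)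
    simpa using this
  rcases (Nat.dvd_prime (by norm_num)).1 h5 with h | h
  · subst h
    have hs₀ : s₀ = 30 := by omega
    have hm₀ : m₀ = 35 := by omega
    subst hs₀ hm₀
    have := ht 5 ⟨42, by norm_num⟩
    norm_num [Nat.isUnit_iff] at this
  · subst h
    omega

/-! ### Sums of five squares -/

lemma natCast_mem_ringOfInt (K : IntermediateField ℚ ℝ) (n : ℕ) : (n : ℝ) ∈ ringOfInt K :=
  ⟨natCast_mem K n, by exact_mod_cast isIntegral_algebraMap (R := ℤ) (A := ℝ) (x := (n : ℤ))⟩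

lemma add_mem_ringOfInt {K : IntermediateField ℚ ℝ} {u v : ℝ} (hu : u ∈ ringOfInt K)
    (hv : v ∈ ringOfInt K) : u + v ∈ ringOfInt K :=
  ⟨add_mem hu.1 hv.1, hu.2.add hv.2⟩

lemma sum_sq_mem_ringOfInt {K : IntermediateField ℚ ℝ} {n : ℕ} {α : ℝ}
    (h : SumOfNSquaresIn (ringOfInt K) n α) : α ∈ ringOfInt K := by
  obtain ⟨u, hu, rfl⟩ := h
  exact ⟨sum_mem fun i _ => pow_mem (hu i).1 2, IsIntegral.sum _ fun i _ => (hu i).2.pow 2⟩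

lemma sqrt_mem_ringOfInt {K : IntermediateField ℚ ℝ} {n : ℕ} (h : √(n : ℝ) ∈ K) :
    √(n : ℝ) ∈ ringOfInt K :=
  ⟨h, IsIntegral.of_pow (n := 2) (by norm_num) (by
    rw [Real.sq_sqrt (Nat.cast_nonneg _)]
    exact_mod_cast isIntegral_algebraMap (R := ℤ) (A := ℝ) (x := (n : ℤ)))⟩

/-- `7 + (1 + √n)² = 2² + 1² + 1² + 1² + (1 + √n)²`. -/
lemma five_squares_sqrt {K : IntermediateField ℚ ℝ} {n : ℕ} (h : √(n : ℝ) ∈ K) :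
    SumOfNSquaresIn (ringOfInt K) 5 (7 + (1 + √(n : ℝ)) ^ 2) := by
  have h1 : (1 : ℝ) ∈ ringOfInt K := by simpa using natCast_mem_ringOfInt K 1
  have h2 : (2 : ℝ) ∈ ringOfInt K := by simpa using natCast_mem_ringOfInt K 2
  have h3 := add_mem_ringOfInt h1 (sqrt_mem_ringOfInt h)
  refine ⟨![2, 1, 1, 1, 1 + √(n : ℝ)], ?_, ?_⟩
  · intro i
    fin_cases i
    exacts [h2, h1, h1, h1, h3]
  · simp [Fin.sum_univ_succ]
    ring

lemma five_squares_thirteen {K : IntermediateField ℚ ℝ} (h : √(13 : ℝ) ∈ K) :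
    SumOfNSquaresIn (ringOfInt K) 5
      (3 + ((1 + √13) / 2) ^ 2 + (1 + (1 + √13) / 2) ^ 2) := by
  have h1 : (1 : ℝ) ∈ ringOfInt K := by simpa using natCast_mem_ringOfInt K 1
  have h3 : (1 + √13) / 2 ∈ ringOfInt K := by
    refine ⟨div_mem (add_mem (one_mem _) h) (by exact_mod_cast natCast_mem K 2), ?_⟩
    refine ⟨Polynomial.X ^ 2 - Polynomial.X - 3, by monicity!, ?_⟩
    have := Real.sq_sqrt (show (0 : ℝ) ≤ 13 by norm_num)
    simp
    linear_combination this / 4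
  have h4 := add_mem_ringOfInt h1 h3
  refine ⟨![1, 1, 1, (1 + √13) / 2, 1 + (1 + √13) / 2], ?_, ?_⟩
  · intro i
    fin_cases i
    exacts [h1, h1, h1, h3, h4]
  · simp [Fin.sum_univ_succ]
    ring

/-- Let `K` be a totally real biquadratic field with `1 < m < s < t`
the three squarefree integers whose square roots lie in `K`. Suppose `m ≢ 1 (mod 4)`,
`m ∉ {2, 3, 6, 7}` and `s ∉ {m+4, m+8, m+12}`. Then `P(O_K) ≥ 5`; moreover
`α₀ = 7 + (1+√m)²` has length exactly `5`, except for `(m,s) ∈ {(10,13),(11,13),(30,35)}`,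
where the indicated alternative elements have length exactly `5`. -/
theorem length_five_element_m_not_one_mod_four
    (K : IntermediateField ℚ ℝ) (hK : IsBiquadratic K)
    (m s t : ℕ) (hm : Squarefree m) (hs : Squarefree s) (ht : Squarefree t)
    (h1m : 1 < m) (hms : m < s) (hst : s < t)
    (hmK : Real.sqrt m ∈ K) (hsK : Real.sqrt s ∈ K) (htK : Real.sqrt t ∈ K)
    (hm4 : m % 4 ≠ 1) (hmS : m ∉ ({2, 3, 6, 7} : Set ℕ))
    (hs4 : s ≠ m + 4) (hs8 : s ≠ m + 8) (hs12 : s ≠ m + 12) :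
    (∃ α ∈ ringOfInt K, IsSumOfSquaresIn (ringOfInt K) α ∧
      ¬ SumOfNSquaresIn (ringOfInt K) 4 α) ∧
    ((m, s) ∉ ({(10, 13), (11, 13), (30, 35)} : Set (ℕ × ℕ)) →
      SumOfNSquaresIn (ringOfInt K) 5 (7 + (1 + Real.sqrt m) ^ 2) ∧
      ¬ SumOfNSquaresIn (ringOfInt K) 4 (7 + (1 + Real.sqrt m) ^ 2)) ∧
    ((m, s) = (10, 13) ∨ (m, s) = (11, 13) →
      SumOfNSquaresIn (ringOfInt K) 5
        (3 + ((1 + Real.sqrt 13) / 2) ^ 2 + (1 + (1 + Real.sqrt 13) / 2) ^ 2) ∧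
      ¬ SumOfNSquaresIn (ringOfInt K) 4
        (3 + ((1 + Real.sqrt 13) / 2) ^ 2 + (1 + (1 + Real.sqrt 13) / 2) ^ 2)) ∧
    ((m, s) = (30, 35) →
      SumOfNSquaresIn (ringOfInt K) 5 (7 + (1 + Real.sqrt 42) ^ 2) ∧
      ¬ SumOfNSquaresIn (ringOfInt K) 4 (7 + (1 + Real.sqrt 42) ^ 2)) := by
  obtain ⟨t₀, s₀, m₀, ht₀, hts, hsm, rfl, rfl, rfl, hcoord⟩ :=
    exists_factors_and_coords hK hm hs ht h1m hms hst hmK hsK htK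
  have hm0 := squarefree_mod_four hm
  have hm10 : 10 ≤ t₀ * s₀ := by
    simp only [Set.mem_insert_iff, Set.mem_singleton_iff, not_or] at hmS
    omega
  have main : (t₀ * s₀, t₀ * m₀) ∉ ({(10, 13), (11, 13), (30, 35)} : Set (ℕ × ℕ)) →
      SumOfNSquaresIn (ringOfInt K) 5 (7 + (1 + √((t₀ * s₀ : ℕ) : ℝ)) ^ 2) ∧
      ¬ SumOfNSquaresIn (ringOfInt K) 4 (7 + (1 + √((t₀ * s₀ : ℕ) : ℝ)) ^ 2) := by
    intro hne
    simp only [Set.mem_insert_iff, Set.mem_singleton_iff, Prod.mk.injEq] at hne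
    exact ⟨five_squares_sqrt hmK, alpha_not_sum_of_four ht₀ hts hsm hm hs ht hm4 hm10 hs4 hs8
      hs12 hcoord (by tauto) (by tauto)⟩
  have thirteen : (t₀ * s₀, t₀ * m₀) = (10, 13) ∨ (t₀ * s₀, t₀ * m₀) = (11, 13) →
      SumOfNSquaresIn (ringOfInt K) 5
        (3 + ((1 + √13) / 2) ^ 2 + (1 + (1 + √13) / 2) ^ 2) ∧
      ¬ SumOfNSquaresIn (ringOfInt K) 4
        (3 + ((1 + √13) / 2) ^ 2 + (1 + (1 + √13) / 2) ^ 2) := by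
    intro he
    simp only [Prod.mk.injEq] at he
    have hs13 : t₀ * m₀ = 13 := by tauto
    refine ⟨five_squares_thirteen ?_, thirteen_not_sum_of_four ht₀ hts hsm hm hs ht hcoord hs13
      (by tauto)⟩
    rw [hs13] at hsK
    exact_mod_cast hsK
  have thirty : (t₀ * s₀, t₀ * m₀) = (30, 35) →
      SumOfNSquaresIn (ringOfInt K) 5 (7 + (1 + √42) ^ 2) ∧
      ¬ SumOfNSquaresIn (ringOfInt K) 4 (7 + (1 + √42) ^ 2) := by
    intro he
    simp only [Prod.mk.injEq] at he
    obtain ⟨rfl, rfl, rfl⟩ := factors_thirty he.1 he.2 ht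
    exact ⟨by exact_mod_cast five_squares_sqrt htK, forty_two_not_sum_of_four hcoord hm hs ht⟩
  refine ⟨?_, main, thirteen, thirty⟩
  have conclude : ∀ α, SumOfNSquaresIn (ringOfInt K) 5 α ∧ ¬ SumOfNSquaresIn (ringOfInt K) 4 α →
      ∃ α ∈ ringOfInt K, IsSumOfSquaresIn (ringOfInt K) α ∧
        ¬ SumOfNSquaresIn (ringOfInt K) 4 α :=
    fun α h => ⟨α, sum_sq_mem_ringOfInt h.1, ⟨5, h.1⟩, h.2⟩
  by_cases h1 : (t₀ * s₀, t₀ * m₀) = (10, 13) ∨ (t₀ * s₀, t₀ * m₀) = (11, 13)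
  · exact conclude _ (thirteen h1)
  by_cases h2 : (t₀ * s₀, t₀ * m₀) = (30, 35)
  · exact conclude _ (thirty h2)
  · exact conclude _ (main (by
      simp only [Set.mem_insert_iff, Set.mem_singleton_iff]
      tauto))
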